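/- arXiv:2301.09265 — 2 statements merged into one kernel-verified Lean document; each statement's English description precedes it below -/
import Mathlib

section
/- (Casolo–Tombari) Let G be a finite group such that for every prime p dividing some conjugacy class size of G one has N(G)_p = {1, p^{α(p)}} for some α(p) ≥ 1, and suppose that N(G) equals the set of all products ∏_{p ∈ S} p^{α(p)} over subsets S of the set of primes dividing elements of N(G). Then G is nilpotent. -/
/-- The index of an element `x` of a group `G`: the size of its conjugacy class,
`|x^G| = |G : C_G(x)|`. -/
noncomputable def classSize {G : Type*} [Group G] (x : G) : ℕ :=
  (Subgroup.centralizer {x}).index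

/-- The `p`-index of `x`: the `p`-part of `|x^G|`. -/
noncomputable def pIndex (p : ℕ) {G : Type*} [Group G] (x : G) : ℕ :=
  p ^ ((classSize x).factorization p)

/-- `G` is `p`-index extremal (`G ∈ R(p)`): the set `N(G)_p` of `p`-indices of elements of `G`
contains exactly one nontrivial element. -/
def IsPIndexExtremal (p : ℕ) (G : Type*) [Group G] : Prop :=
  ∃! a : ℕ, a ≠ 1 ∧ ∃ x : G, pIndex p x = a

/-- `x` is a `p`-element: its order is a power of `p`. -/
def IsPElement (p : ℕ) {G : Type*} [Group G] (x : G) : Prop :=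
  ∃ k : ℕ, orderOf x = p ^ k

section Helpers

open Subgroup

section Basic
variable {G : Type*} [Group G]

abbrev Cz (x : G) : Subgroup G := Subgroup.centralizer ({x} : Set G)

lemma mem_Cz {x y : G} : y ∈ Cz x ↔ Commute y x := by
  rw [Subgroup.mem_centralizer_singleton_iff]
  exact ⟨fun h => h, fun h => h⟩

/-- conjugation -/
def cj (c x : G) : G := c * x * c⁻¹

lemma cj_cj (a b x : G) : cj a (cj b x) = cj (a * b) x := by
  simp [cj, mul_assoc]

lemma cj_one (x : G) : cj 1 x = x := by simp [cj]

lemma cj_inv_cj (a x : G) : cj a⁻¹ (cj a x) = x := by rw [cj_cj]; simp [cj_one]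

lemma cj_cj_inv (a x : G) : cj a (cj a⁻¹ x) = x := by rw [cj_cj]; simp [cj_one]

lemma cj_mul (a x y : G) : cj a (x * y) = cj a x * cj a y := by simp [cj]

lemma cj_eq_conj (a x : G) : cj a x = MulAut.conj a x := by simp [cj]

lemma cj_commute_iff {a x y : G} : Commute (cj a x) (cj a y) ↔ Commute x y := by
  constructor
  · intro h
    have := h.map (MulAut.conj a⁻¹).toMonoidHom
    simp only [MulEquiv.toMonoidHom_eq_coe, MonoidHom.coe_coe, ← cj_eq_conj, cj_inv_cj] at this
    exact this
  · intro h
    have := h.map (MulAut.conj a).toMonoidHom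
    simp only [MulEquiv.toMonoidHom_eq_coe, MonoidHom.coe_coe, ← cj_eq_conj] at this
    exact this

lemma cj_fix {c w : G} (h : Commute c w) : cj c w = w := by
  unfold cj; rw [h.eq]; simp

lemma cj_fix_iff {c w : G} : cj c w = w ↔ Commute c w := by
  constructor
  · intro h
    unfold cj at h
    rw [mul_inv_eq_iff_eq_mul] at h
    exact h
  · exact cj_fix

lemma orderOf_cj (c x : G) : orderOf (cj c x) = orderOf x := by
  rw [cj_eq_conj]
  exact orderOf_injective (MulAut.conj c).toMonoidHom (MulAut.conj c).injective x

lemma IsPElement.cj {p : ℕ} {x : G} (h : IsPElement p x) (c : G) : IsPElement p (cj c x) := by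
  obtain ⟨k, hk⟩ := h
  exact ⟨k, by rw [orderOf_cj, hk]⟩

lemma isPElement_one (p : ℕ) : IsPElement p (1 : G) := ⟨0, by simp⟩

lemma isPElement_iff_dvd {p : ℕ} (hp : p.Prime) {x : G} :
    IsPElement p x ↔ ∃ k, x ^ p ^ k = 1 := by
  constructor
  · rintro ⟨k, hk⟩; exact ⟨k, by rw [← hk]; exact pow_orderOf_eq_one x⟩
  · rintro ⟨k, hk⟩
    obtain ⟨m, _, hm⟩ := (Nat.dvd_prime_pow hp).1 (orderOf_dvd_of_pow_eq_one hk)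
    exact ⟨m, hm⟩

lemma IsPElement.mul {p : ℕ} (hp : p.Prime) {x y : G} (hx : IsPElement p x) (hy : IsPElement p y)
    (h : Commute x y) : IsPElement p (x * y) := by
  rw [isPElement_iff_dvd hp] at *
  obtain ⟨k, hk⟩ := hx
  obtain ⟨l, hl⟩ := hy
  refine ⟨k + l, ?_⟩
  rw [h.mul_pow, pow_add, pow_mul, hk, mul_comm, pow_mul, hl]; simp

lemma IsPElement.inv {p : ℕ} {x : G} (hx : IsPElement p x) : IsPElement p x⁻¹ := by
  obtain ⟨k, hk⟩ := hx; exact ⟨k, by rw [orderOf_inv, hk]⟩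

lemma isPElement_of_orderOf_dvd {p : ℕ} (hp : p.Prime) {x y : G} (hx : IsPElement p x)
    (h : orderOf y ∣ orderOf x) : IsPElement p y := by
  obtain ⟨k, hk⟩ := hx
  rw [hk] at h
  obtain ⟨m, _, hm⟩ := (Nat.dvd_prime_pow hp).1 h
  exact ⟨m, hm⟩

lemma IsPElement.coprime {p : ℕ} (hp : p.Prime) {x : G} (hx : IsPElement p x) {n : ℕ}
    (h : ¬ p ∣ n) : (orderOf x).Coprime n := by
  obtain ⟨k, hk⟩ := hx
  rw [hk]
  exact Nat.Coprime.pow_left _ ((Nat.Prime.coprime_iff_not_dvd hp).2 h)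

lemma IsPElement.coprime' {p q : ℕ} (hp : p.Prime) (hq : q.Prime) (hpq : p ≠ q) {x y : G}
    (hx : IsPElement p x) (hy : IsPElement q y) : (orderOf x).Coprime (orderOf y) := by
  obtain ⟨k, hk⟩ := hx
  obtain ⟨l, hl⟩ := hy
  rw [hk, hl]
  exact Nat.Coprime.pow _ _ ((Nat.coprime_primes hp hq).2 hpq)

lemma IsPElement.subtype {p : ℕ} {H : Subgroup G} {x : H} :
    IsPElement p x ↔ IsPElement p (x : G) := by
  unfold IsPElement; rw [Subgroup.orderOf_coe]

lemma isPElement_of_mem_isPGroup {p : ℕ} (hp : p.Prime) {H : Subgroup G} (hH : IsPGroup p H)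
    {x : G} (hx : x ∈ H) : IsPElement p x := by
  rw [isPElement_iff_dvd hp]
  obtain ⟨k, hk⟩ := hH ⟨x, hx⟩
  exact ⟨k, by simpa [Subtype.ext_iff] using hk⟩

lemma isPGroup_of_forall {p : ℕ} (hp : p.Prime) {H : Subgroup G}
    (h : ∀ x ∈ H, IsPElement p x) : IsPGroup p H := by
  rintro ⟨x, hx⟩
  obtain ⟨k, hk⟩ := (isPElement_iff_dvd hp).1 (h x hx)
  exact ⟨k, by simpa [Subtype.ext_iff] using hk⟩

lemma IsPElement.isPGroup_zpowers {p : ℕ} {x : G} (hp : p.Prime) (hx : IsPElement p x) :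
    IsPGroup p (zpowers x) := by
  apply isPGroup_of_forall hp
  intro y hy
  exact isPElement_of_orderOf_dvd hp hx (orderOf_dvd_of_mem_zpowers hy)

lemma Commute.of_mem_zpowers {x y z : G} (h : Commute x z) (hy : y ∈ zpowers x) : Commute y z := by
  obtain ⟨n, rfl⟩ := hy
  exact h.zpow_left n

/-- commuting of coprime order: each factor is a power of the product -/
lemma left_mem_zpowers_mul {x y : G} (h : Commute x y)
    (hc : (orderOf x).Coprime (orderOf y)) : x ∈ zpowers (x * y) := by
  have h1 : (x * y) ^ orderOf y = x ^ orderOf y := by rw [h.mul_pow, pow_orderOf_eq_one, mul_one]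
  have h2 : x ^ orderOf y ∈ zpowers (x * y) := by
    rw [← h1]; exact Subgroup.pow_mem _ (mem_zpowers _) _
  have h3 : x ∈ zpowers (x ^ orderOf y) := by
    obtain ⟨m, hm⟩ := exists_pow_eq_self_of_coprime hc.symm
    exact ⟨m, by simpa using hm⟩
  exact (zpowers_le.2 h2) h3

lemma right_mem_zpowers_mul {x y : G} (h : Commute x y)
    (hc : (orderOf x).Coprime (orderOf y)) : y ∈ zpowers (x * y) := by
  rw [h.eq]; exact left_mem_zpowers_mul h.symm hc.symm

lemma commute_mul_iff {x y z : G} (h : Commute x y)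
    (hc : (orderOf x).Coprime (orderOf y)) : Commute z (x * y) ↔ Commute z x ∧ Commute z y := by
  constructor
  · intro hz
    exact ⟨(hz.symm.of_mem_zpowers (left_mem_zpowers_mul h hc)).symm,
      (hz.symm.of_mem_zpowers (right_mem_zpowers_mul h hc)).symm⟩
  · rintro ⟨a, b⟩; exact a.mul_right b

lemma Cz_mul {x y : G} (h : Commute x y)
    (hc : (orderOf x).Coprime (orderOf y)) : Cz (x * y) = Cz x ⊓ Cz y := by
  ext z; simp only [mem_Cz, Subgroup.mem_inf]; exact commute_mul_iff h hc

lemma classSize_dvd {x y : G} (h : Cz x ≤ Cz y) : classSize y ∣ classSize x :=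
  Subgroup.index_dvd_of_le h

lemma classSize_dvd_of_mem_zpowers {x y : G} (h : y ∈ zpowers x) : classSize y ∣ classSize x := by
  apply classSize_dvd
  intro z hz
  rw [mem_Cz] at *
  exact (hz.symm.of_mem_zpowers h).symm

lemma classSize_dvd_mul_left {x y : G} (h : Commute x y)
    (hc : (orderOf x).Coprime (orderOf y)) : classSize x ∣ classSize (x * y) :=
  classSize_dvd_of_mem_zpowers (left_mem_zpowers_mul h hc)

lemma classSize_dvd_mul_right {x y : G} (h : Commute x y)
    (hc : (orderOf x).Coprime (orderOf y)) : classSize y ∣ classSize (x * y) :=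
  classSize_dvd_of_mem_zpowers (right_mem_zpowers_mul h hc)

lemma Cz_cj (c x : G) : Cz (cj c x) = (Cz x).map (MulAut.conj c).toMonoidHom := by
  ext z
  rw [mem_Cz, Subgroup.mem_map]
  constructor
  · intro h
    refine ⟨cj c⁻¹ z, ?_, ?_⟩
    · rw [mem_Cz, ← @cj_commute_iff _ _ c, cj_cj_inv]; exact h
    · show MulAut.conj c _ = _
      rw [← cj_eq_conj, cj_cj_inv]
  · rintro ⟨w, hw, rfl⟩
    show Commute (MulAut.conj c w) _
    rw [← cj_eq_conj, cj_commute_iff]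
    exact mem_Cz.1 hw

lemma classSize_cj (c x : G) : classSize (cj c x) = classSize x := by
  unfold classSize
  have := Cz_cj c x
  unfold Cz at this
  rw [this]
  exact Subgroup.index_map_of_bijective (MulAut.conj c).bijective _

lemma classSize_one_iff {x : G} : classSize x = 1 ↔ ∀ y, Commute y x := by
  unfold classSize
  rw [Subgroup.index_eq_one]
  constructor
  · intro h y; rw [← mem_Cz]; unfold Cz; rw [h]; trivial
  · intro h; rw [eq_top_iff]; intro y _; exact mem_Cz.2 (h y)

lemma classSize_ne_zero [Finite G] (x : G) : classSize x ≠ 0 := Subgroup.index_ne_zero_of_finite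

end Basic


open Subgroup

set_option linter.unusedSectionVars false

section Tools
variable {G : Type*} [Group G] [Finite G]

lemma conj_into_top {p : ℕ} (hp : p.Prime) {D : Subgroup G} (h : ¬ p ∣ D.index) {x : G}
    (hx : IsPElement p x) : ∃ c : G, cj c x ∈ D := by
  have : Fact p.Prime := ⟨hp⟩
  obtain ⟨a, ha⟩ := (hx.isPGroup_zpowers hp).nonempty_fixed_point_of_prime_not_dvd_card (G ⧸ D) h
  obtain ⟨g, rfl⟩ := QuotientGroup.mk_surjective a
  refine ⟨g⁻¹, ?_⟩
  have h1 := ha ⟨x, mem_zpowers x⟩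
  have h2 : ((x * g : G) : G ⧸ D) = (g : G ⧸ D) := h1
  rw [eq_comm, QuotientGroup.eq] at h2
  simpa [cj, mul_assoc] using h2

lemma conj_into {p : ℕ} (hp : p.Prime) {D E : Subgroup G} (h : ¬ p ∣ D.relIndex E) {x : G}
    (hxE : x ∈ E) (hx : IsPElement p x) : ∃ c ∈ E, cj c x ∈ D := by
  have hx' : IsPElement p (⟨x, hxE⟩ : E) := IsPElement.subtype.2 hx
  obtain ⟨c, hc⟩ := conj_into_top hp (D := D.subgroupOf E) h hx'
  exact ⟨c, c.2, hc⟩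

/-- F1 -/
lemma F1 {r : ℕ} (hr : r.Prime) {s f : G} (h : ¬ r ∣ classSize s) (hf : IsPElement r f) :
    ∃ c, Commute (cj c f) s := by
  obtain ⟨c, hc⟩ := conj_into_top hr h hf
  exact ⟨c, mem_Cz.1 hc⟩

lemma F1' {r : ℕ} (hr : r.Prime) {s f : G} (h : ¬ r ∣ classSize s) (hf : IsPElement r f) :
    ∃ c, Commute f (cj c s) := by
  obtain ⟨c, hc⟩ := F1 hr h hf
  refine ⟨c⁻¹, ?_⟩
  rw [← @cj_commute_iff _ _ c, cj_cj_inv]; exact hc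

lemma coprime_index_decomp {H K : Subgroup G} (h : H.index.Coprime K.index) (g : G) :
    ∃ a ∈ H, ∃ b ∈ K, g = a * b := by
  have h1 : (H ⊓ K).index = H.index * K.index := by
    apply le_antisymm (Subgroup.index_inf_le)
    exact Nat.le_of_dvd (Nat.pos_of_ne_zero Subgroup.index_ne_zero_of_finite)
      (h.mul_dvd_of_dvd_of_dvd (Subgroup.index_dvd_of_le inf_le_left)
      (Subgroup.index_dvd_of_le inf_le_right))
  have h2 : K.relIndex H = K.index := by
    have := Subgroup.relIndex_mul_index (H := H ⊓ K) (K := H) inf_le_left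
    rw [h1, inf_relIndex_left, mul_comm] at this
    exact Nat.eq_of_mul_eq_mul_left (Nat.pos_of_ne_zero Subgroup.index_ne_zero_of_finite) this
  -- orbit of H on G/K is everything
  have h3 : Function.Surjective (fun x : H ⧸ (K.subgroupOf H) =>
      (Quotient.lift (fun a : H => ((a : G) : G ⧸ K)) (by
        intro a b hab
        have := QuotientGroup.leftRel_apply.1 hab
        exact QuotientGroup.eq.2 this) x : G ⧸ K)) := by
    have : Function.Injective (fun x : H ⧸ (K.subgroupOf H) =>
      (Quotient.lift (fun a : H => ((a : G) : G ⧸ K)) (by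
        intro a b hab
        have := QuotientGroup.leftRel_apply.1 hab
        exact QuotientGroup.eq.2 this) x : G ⧸ K)) := by
      intro x y hxy
      obtain ⟨a, rfl⟩ := QuotientGroup.mk_surjective x
      obtain ⟨b, rfl⟩ := QuotientGroup.mk_surjective y
      have h4 : ((a : G) : G ⧸ K) = ((b : G) : G ⧸ K) := hxy
      rw [QuotientGroup.eq] at h4 ⊢
      exact h4
    exact (this.bijective_of_nat_card_le (le_of_eq h2.symm)).2
  obtain ⟨x, hx⟩ := h3 (g : G ⧸ K)
  obtain ⟨a, rfl⟩ := QuotientGroup.mk_surjective x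
  have h4 : ((a : G) : G ⧸ K) = (g : G ⧸ K) := hx
  rw [QuotientGroup.eq] at h4
  exact ⟨a, a.2, _, h4, by simp⟩

/-- F2 -/
lemma F2_coprime {f s : G} (h : (classSize s).Coprime (classSize f)) (hc : Commute f s) (c : G) :
    Commute f (cj c s) := by
  obtain ⟨a, ha, b, hb, rfl⟩ := coprime_index_decomp (H := Cz f) (K := Cz s) h.symm c
  rw [mem_Cz] at ha hb
  rw [← cj_cj, cj_fix hb, ← cj_fix ha, cj_commute_iff]
  exact hc

lemma F2 {k n : ℕ} (hk : k.Prime) {f s : G} (hs : classSize s = k ^ n) (hf : ¬ k ∣ classSize f)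
    (hc : Commute f s) (c : G) : Commute f (cj c s) := by
  apply F2_coprime _ hc
  rw [hs]
  exact Nat.Coprime.pow_left _ ((Nat.Prime.coprime_iff_not_dvd hk).2 hf)

lemma factorization_index_add (p : ℕ) (H : Subgroup G) :
    H.index.factorization p + (Nat.card H).factorization p = (Nat.card G).factorization p := by
  rw [← Subgroup.card_mul_index H, Nat.factorization_mul Nat.card_pos.ne'
    Subgroup.index_ne_zero_of_finite, Finsupp.add_apply, add_comm]

lemma factorization_relIndex_add (p : ℕ) {D E : Subgroup G} (h : D ≤ E) :
    (D.relIndex E).factorization p + (Nat.card D).factorization p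
      = (Nat.card E).factorization p := by
  have := factorization_index_add p (D.subgroupOf E)
  rw [Nat.card_congr (Subgroup.subgroupOfEquivOfLe h).toEquiv] at this
  exact this

lemma not_dvd_relIndex {q : ℕ} (hq : q.Prime) {D E : Subgroup G} (h : D ≤ E)
    (hv : (Nat.card E).factorization q ≤ (Nat.card D).factorization q) :
    ¬ q ∣ D.relIndex E := by
  intro hd
  have h1 := factorization_relIndex_add q h
  have h0 : D.relIndex E ≠ 0 := Subgroup.index_ne_zero_of_finite
  have := (hq.dvd_iff_one_le_factorization h0).1 hd
  omega

/-- L_v -/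
lemma factorization_le_of_forall {q : ℕ} (hq : q.Prime) {D H : Subgroup G}
    (h : ∀ x ∈ H, IsPElement q x → x ∈ D) :
    (Nat.card H).factorization q ≤ (Nat.card D).factorization q := by
  have : Fact q.Prime := ⟨hq⟩
  obtain ⟨S⟩ : Nonempty (Sylow q H) := inferInstance
  have h1 : (S : Subgroup H).map H.subtype ≤ D := by
    rintro _ ⟨x, hx, rfl⟩
    exact h x x.2 (IsPElement.subtype.1 (isPElement_of_mem_isPGroup hq S.2 hx))
  have h2 := Subgroup.card_dvd_of_le h1
  rw [Subgroup.card_map_of_injective H.subtype_injective] at h2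
  have h3 := S.card_eq_multiplicity
  rw [h3] at h2
  exact (hq.pow_dvd_iff_le_factorization Nat.card_pos.ne').1 h2

lemma factorization_card_mono (q : ℕ) {D H : Subgroup G} (h : D ≤ H) :
    (Nat.card D).factorization q ≤ (Nat.card H).factorization q := by
  have := factorization_relIndex_add q h
  omega

/-- PP -/
lemma le_of_forall_prime {H D : Subgroup G}
    (h : ∀ q : ℕ, q.Prime → ∀ x ∈ H, IsPElement q x → x ∈ D) : H ≤ D := by
  have h2 : Nat.card H ∣ Nat.card ↥(D ⊓ H) := by
    rw [← Nat.factorization_le_iff_dvd Nat.card_pos.ne' Nat.card_pos.ne']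
    intro q
    by_cases hq : q.Prime
    · exact factorization_le_of_forall hq (fun x hx hxq => ⟨h q hq x hx hxq, hx⟩)
    · rw [Nat.factorization_eq_zero_of_not_prime _ hq]; exact Nat.zero_le _
  have h3 : D ⊓ H = H := by
    apply Subgroup.eq_of_le_of_card_ge inf_le_right
    exact Nat.le_of_dvd Nat.card_pos h2
  rw [← h3]; exact inf_le_left

lemma classSize_factorization_add (p : ℕ) (x : G) :
    (classSize x).factorization p + (Nat.card (Cz x)).factorization p
      = (Nat.card G).factorization p := factorization_index_add p _

/-- KeyTool -/
lemma keyTool {q : ℕ} (hq : q.Prime) {z w u : G} (hzw : Commute z w)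
    (hc : (orderOf z).Coprime (orderOf w))
    (hv : (classSize (z * w)).factorization q = (classSize w).factorization q)
    (hu : IsPElement q u) (huw : Commute u w) : ∃ c, Commute c w ∧ Commute (cj c u) z := by
  have h1 := classSize_factorization_add q (z * w)
  have h2 := classSize_factorization_add q w
  have hle : Cz (z * w) ≤ Cz w := by rw [Cz_mul hzw hc]; exact inf_le_right
  have h3 := not_dvd_relIndex hq hle (by omega)
  obtain ⟨c, hcE, hcD⟩ := conj_into hq h3 (mem_Cz.2 huw) hu
  rw [Cz_mul hzw hc] at hcD
  exact ⟨c, mem_Cz.1 hcE, mem_Cz.1 hcD.1⟩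

/-- Jordan -/
lemma jordan {H : Subgroup G} (hH : H ≠ ⊤) : ∃ x : G, ∀ c : G, cj c x ∉ H := by
  classical
  by_contra hcon
  push Not at hcon
  have : Fintype G := Fintype.ofFinite G
  have : Fintype (G ⧸ H) := Fintype.ofFinite _
  have hb := MulAction.sum_card_fixedBy_eq_card_orbits_mul_card_group G (G ⧸ H)
  have h1 : ∀ g : G, 1 ≤ Fintype.card (MulAction.fixedBy (G ⧸ H) g) := by
    intro g
    obtain ⟨c, hc⟩ := hcon g
    apply Fintype.card_pos_iff.2
    refine ⟨⟨((c⁻¹ : G) : G ⧸ H), ?_⟩⟩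
    show ((g * c⁻¹ : G) : G ⧸ H) = ((c⁻¹ : G) : G ⧸ H)
    rw [eq_comm, QuotientGroup.eq]
    simpa [cj, mul_assoc] using hc
  have h2 : Fintype.card (Quotient (MulAction.orbitRel G (G ⧸ H))) = 1 := by
    rw [Fintype.card_eq_one_iff]
    have : Subsingleton (Quotient (MulAction.orbitRel G (G ⧸ H))) :=
      MulAction.pretransitive_iff_subsingleton_quotient G (G ⧸ H) |>.1 inferInstance
    exact ⟨Quotient.mk _ ((1 : G) : G ⧸ H), fun a => Subsingleton.elim _ _⟩
  rw [h2, one_mul] at hb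
  have h3 : 1 < Fintype.card (MulAction.fixedBy (G ⧸ H) (1 : G)) := by
    have : Fintype.card (MulAction.fixedBy (G ⧸ H) (1 : G)) = H.index := by
      rw [Subgroup.index, Nat.card_eq_fintype_card]
      apply Fintype.card_congr
      exact (Equiv.subtypeUnivEquiv (fun x => by simp))
    rw [this]
    exact Subgroup.one_lt_index_of_ne_top hH
  have h4 : ∑ g : G, 1 < ∑ g : G, Fintype.card (MulAction.fixedBy (G ⧸ H) g) := by
    apply Finset.sum_lt_sum (fun g _ => h1 g) ⟨1, Finset.mem_univ _, h3⟩
  rw [hb] at h4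
  simp at h4

/-- Cov -/
lemma cov {p n : ℕ} (hp : p.Prime) (hn : 1 ≤ n) {u : G} (hu : classSize u = p ^ n) :
    ∃ x : G, IsPElement p x ∧ ∀ c, ¬ Commute x (cj c u) := by
  have : Fact p.Prime := ⟨hp⟩
  obtain ⟨S⟩ : Nonempty (Sylow p G) := inferInstance
  have hcop : (S : Subgroup G).index.Coprime (Cz u).index := by
    have : (Cz u).index = p ^ n := hu
    rw [this]
    exact (Nat.Coprime.pow_left _ ((Nat.Prime.coprime_iff_not_dvd hp).2 S.not_dvd_index)).symm
  have hne : (Cz u).subgroupOf (S : Subgroup G) ≠ ⊤ := by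
    intro h
    rw [Subgroup.subgroupOf_eq_top] at h
    have h1 := Subgroup.index_dvd_of_le h
    have : (Cz u).index = p ^ n := hu
    rw [this] at h1
    exact S.not_dvd_index ((dvd_pow_self p (by omega)).trans h1)
  obtain ⟨x, hx⟩ := jordan hne
  refine ⟨x, isPElement_of_mem_isPGroup hp S.2 x.2, ?_⟩
  intro c hcx
  obtain ⟨a, ha, b, hb, rfl⟩ := coprime_index_decomp hcop c
  rw [← cj_cj, cj_fix (mem_Cz.1 hb), ← @cj_commute_iff _ _ a⁻¹, cj_inv_cj] at hcx
  apply hx ⟨a⁻¹, inv_mem ha⟩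
  exact mem_Cz.2 hcx

/-- Split -/
lemma split (p : ℕ) (hp : p.Prime) (g : G) : ∃ x y : G, x ∈ zpowers g ∧ y ∈ zpowers g ∧
    g = x * y ∧ Commute x y ∧ IsPElement p x ∧ (orderOf y).Coprime p := by
  have hn : orderOf g ≠ 0 := (orderOf_pos g).ne'
  set A := ordProj[p] (orderOf g)
  set B := ordCompl[p] (orderOf g)
  have hAB : A * B = orderOf g := Nat.ordProj_mul_ordCompl_eq_self _ _
  have hcop : A.Coprime B := Nat.Coprime.pow_left _ (Nat.coprime_ordCompl hp hn)
  have hbz := Nat.gcd_eq_gcd_ab A B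
  rw [hcop.gcd_eq_one] at hbz
  have hg : g = g ^ ((B : ℤ) * Nat.gcdB A B) * g ^ ((A : ℤ) * Nat.gcdA A B) := by
    rw [← zpow_add, add_comm, ← hbz]; simp
  refine ⟨_, _, ⟨_, rfl⟩, ⟨_, rfl⟩, hg, (Commute.refl g).zpow_zpow _ _, ?_, ?_⟩
  · rw [isPElement_iff_dvd hp]
    refine ⟨(orderOf g).factorization p, ?_⟩
    show (g ^ ((B : ℤ) * Nat.gcdB A B)) ^ A = 1
    rw [← zpow_natCast, ← zpow_mul, mul_right_comm, mul_comm (B : ℤ), zpow_mul]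
    rw [show ((A : ℤ) * (B : ℤ)) = ((A * B : ℕ) : ℤ) by push_cast; ring, hAB, zpow_natCast,
      pow_orderOf_eq_one, one_zpow]
  · have h1 : (g ^ ((A : ℤ) * Nat.gcdA A B)) ^ B = 1 := by
      rw [← zpow_natCast, ← zpow_mul, mul_right_comm, zpow_mul]
      rw [show ((A : ℤ) * (B : ℤ)) = ((A * B : ℕ) : ℤ) by push_cast; ring, hAB, zpow_natCast,
        pow_orderOf_eq_one, one_zpow]
    exact Nat.Coprime.coprime_dvd_left (orderOf_dvd_of_pow_eq_one h1)
      (Nat.coprime_ordCompl hp hn).symm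

end Tools


open Subgroup

set_option linter.unusedSectionVars false

section JW
variable {G : Type*} [Group G] [Finite G]

lemma conj_into_sub {p : ℕ} (hp : p.Prime) {D P : Subgroup G} (h : ¬ p ∣ D.index)
    (hP : IsPGroup p P) : ∃ c : G, ∀ x ∈ P, cj c x ∈ D := by
  have : Fact p.Prime := ⟨hp⟩
  obtain ⟨a, ha⟩ := hP.nonempty_fixed_point_of_prime_not_dvd_card (G ⧸ D) h
  obtain ⟨g, rfl⟩ := QuotientGroup.mk_surjective a
  refine ⟨g⁻¹, fun x hx => ?_⟩
  have h1 := ha ⟨x, hx⟩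
  have h2 : ((x * g : G) : G ⧸ D) = (g : G ⧸ D) := h1
  rw [eq_comm, QuotientGroup.eq] at h2
  simpa [cj, mul_assoc] using h2

lemma J2 {p : ℕ} (hp : p.Prime) (h : ∀ g : G, ¬ p ∣ classSize g) {x : G} (hx : IsPElement p x)
    (g : G) : Commute g x := by
  have : Fact p.Prime := ⟨hp⟩
  obtain ⟨S⟩ : Nonempty (Sylow p G) := inferInstance
  have htop : Subgroup.centralizer ((S : Subgroup G) : Set G) = ⊤ := by
    by_contra hne
    obtain ⟨y, hy⟩ := jordan hne
    obtain ⟨c, hc⟩ := conj_into_sub hp (h y) S.2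
    apply hy c⁻¹
    rw [Subgroup.mem_centralizer_iff]
    intro s hs
    have := mem_Cz.1 (hc s hs)
    rw [← @cj_commute_iff _ _ c⁻¹, cj_inv_cj] at this
    exact this
  obtain ⟨c, hc⟩ := conj_into_top hp S.not_dvd_index hx
  have h1 : cj c g ∈ Subgroup.centralizer ((S : Subgroup G) : Set G) := by rw [htop]; trivial
  rw [← @cj_commute_iff _ _ c]
  exact (Subgroup.mem_centralizer_iff.1 h1 _ hc).symm

lemma J1 {p : ℕ} (hp : p.Prime)
    (h : ∀ g : G, (orderOf g).Coprime p → ¬ p ∣ classSize g) {x y : G} (hx : IsPElement p x)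
    (hy : (orderOf y).Coprime p) : Commute x y := by
  have : Fact p.Prime := ⟨hp⟩
  obtain ⟨S⟩ : Nonempty (Sylow p G) := inferInstance
  set P : Subgroup G := (S : Subgroup G) with hPdef
  set K := Subgroup.centralizer (P : Set G) with hK
  have key : ∀ x y : G, Commute x y → IsPElement p x → (orderOf y).Coprime p →
      ∃ e, cj e x ∈ P ∧ cj e y ∈ K := by
    intro x y hxy hx hy
    obtain ⟨c, hc⟩ := conj_into_sub hp (h y hy) S.2
    set P' : Subgroup G := P.map (MulAut.conj c).toMonoidHom with hP'
    have hP'le : P' ≤ Cz y := by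
      rintro _ ⟨s, hs, rfl⟩
      have := hc s hs
      rw [cj_eq_conj] at this
      exact this
    have hind : P'.index = P.index := Subgroup.index_map_of_bijective (MulAut.conj c).bijective _
    have h1 : ¬ p ∣ P'.relIndex (Cz y) := by
      intro hd
      exact S.not_dvd_index (by
        rw [← hPdef, ← hind]; exact hd.trans (Subgroup.relIndex_dvd_index_of_le hP'le))
    obtain ⟨d, hd, s, hs, hds⟩ := conj_into hp h1 (mem_Cz.2 hxy) hx
    refine ⟨c⁻¹ * d, ?_, ?_⟩
    · rw [← cj_cj, ← hds]
      have : (MulAut.conj c).toMonoidHom s = cj c s := (cj_eq_conj c s).symm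
      rw [this, cj_inv_cj]; exact hs
    · rw [← cj_cj, cj_fix (mem_Cz.1 hd), hK, Subgroup.mem_centralizer_iff]
      intro s hs
      have := mem_Cz.1 (hc s hs)
      rw [← @cj_commute_iff _ _ c⁻¹, cj_inv_cj] at this
      exact this
  have htop : P ⊔ K = ⊤ := by
    by_contra hne
    obtain ⟨g, hg⟩ := jordan hne
    obtain ⟨x, y, -, -, rfl, hxy, hx, hy⟩ := split p hp g
    obtain ⟨e, he1, he2⟩ := key x y hxy hx hy
    apply hg e
    rw [cj_mul]
    exact Subgroup.mul_mem_sup he1 he2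
  have hN : P.Normal := by
    rw [← Subgroup.normalizer_eq_top_iff, eq_top_iff, ← htop]
    apply sup_le Subgroup.le_normalizer
    intro k hk
    rw [Subgroup.mem_normalizer_iff]
    intro s
    rw [hK, Subgroup.mem_centralizer_iff] at hk
    constructor
    · intro hs
      have := hk s hs
      rw [← this]; simpa using hs
    · intro hs
      have := hk _ hs
      have h2 : k * s * k⁻¹ = s := by
        have h3 : k * (k * s * k⁻¹) = k * s := by rw [← this]; simp
        exact mul_left_cancel h3
      rwa [h2] at hs
  have hKN : K.Normal := by rw [hK]; infer_instance
  have hxP : x ∈ P := by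
    obtain ⟨e, he1, -⟩ := key x 1 (Commute.one_right x) hx (by simp)
    have := hN.conj_mem _ he1 e⁻¹
    have h2 : e⁻¹ * cj e x * e⁻¹⁻¹ = x := cj_inv_cj e x
    rwa [h2] at this
  have hyK : y ∈ K := by
    obtain ⟨e, -, he1⟩ := key 1 y (Commute.one_left y) (isPElement_one p) hy
    have := hKN.conj_mem _ he1 e⁻¹
    have h2 : e⁻¹ * cj e y * e⁻¹⁻¹ = y := cj_inv_cj e y
    rwa [h2] at this
  exact Subgroup.mem_centralizer_iff.1 hyK x hxP

lemma wielandt {k n : ℕ} (hk : k.Prime) {y : G} (hy : IsPElement k y) (hcs : classSize y = k ^ n)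
    (S : Sylow k G) (c : G) : cj c y ∈ (S : Subgroup G) := by
  have : Fact k.Prime := ⟨hk⟩
  obtain ⟨d, hd⟩ := conj_into_top hk S.not_dvd_index hy
  have hcs' : (Cz (cj d y)).index = k ^ n := by rw [← hcs, ← classSize_cj d y]; rfl
  have hcop : (S : Subgroup G).index.Coprime (Cz (cj d y)).index := by
    rw [hcs']
    exact (Nat.Coprime.pow_left _ ((Nat.Prime.coprime_iff_not_dvd hk).2 S.not_dvd_index)).symm
  obtain ⟨a, ha, b, hb, hab⟩ := coprime_index_decomp hcop (c * d⁻¹)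
  have h1 : cj c y = cj (c * d⁻¹) (cj d y) := by rw [cj_cj]; simp
  rw [h1, hab, ← cj_cj, cj_fix (mem_Cz.1 hb)]
  exact mul_mem (mul_mem ha hd) (inv_mem ha)

end JW

section Beta
variable {G : Type*} [Group G] [Finite G]

/-- conjugation action on a fibre of the quotient map -/
@[reducible]
def fibreAction (T : Subgroup G) [T.Normal] (x : G) (Y : Subgroup G)
    (hY : ∀ g ∈ Y, Commute (g : G ⧸ T) (x : G ⧸ T)) :
    MulAction Y {y : G // (y : G ⧸ T) = (x : G ⧸ T)} where
  smul g y := ⟨cj (g : G) y, by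
    have h := hY g g.2
    have : ((cj (g : G) y : G) : G ⧸ T) = cj (g : G ⧸ T) ((y : G) : G ⧸ T) := by simp [cj]
    rw [this, y.2, cj_fix h]⟩
  one_smul y := Subtype.ext (cj_one _)
  mul_smul a b y := Subtype.ext (cj_cj _ _ _).symm

lemma beta1 {p q a b : ℕ} (hp : p.Prime) (hq : q.Prime) (hpq : p ≠ q) (ha : 1 ≤ a)
    (hall : ∀ x : G, IsPElement p x → classSize x = 1 ∨ classSize x = q ^ b)
    {u : G} (hcu : classSize u = p ^ a) (T : Subgroup G) [T.Normal]
    (hT : ∀ t ∈ T, IsPElement p t) (hTu : ∀ t ∈ T, Commute t u) {t1 : G} (ht1 : t1 ∈ T)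
    (ht1c : classSize t1 ≠ 1) : False := by
  have : Fact p.Prime := ⟨hp⟩
  have : Fact q.Prime := ⟨hq⟩
  obtain ⟨x, hx, hxu⟩ := cov hp ha hcu
  have hTc : ∀ t ∈ T, ∀ c, Commute t (cj c u) := by
    intro t ht c
    rw [← @cj_commute_iff _ _ c⁻¹, cj_inv_cj]
    exact hTu _ (Subgroup.Normal.conj_mem inferInstance t ht c⁻¹)
  have hmk : ∀ t ∈ T, ((x * t : G) : G ⧸ T) = (x : G ⧸ T) := by
    intro t ht; rw [eq_comm, QuotientGroup.eq]; simpa using ht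
  have hpt : ∀ t ∈ T, IsPElement p (x * t) := by
    intro t ht
    obtain ⟨k, hk⟩ := (isPElement_iff_dvd hp).1 hx
    have h1 : (((x * t) ^ p ^ k : G) : G ⧸ T) = 1 := by
      rw [QuotientGroup.mk_pow, hmk t ht, ← QuotientGroup.mk_pow, hk]; rfl
    rw [QuotientGroup.eq_one_iff] at h1
    obtain ⟨l, hl⟩ := (isPElement_iff_dvd hp).1 (hT _ h1)
    exact (isPElement_iff_dvd hp).2 ⟨k + l, by rw [pow_add, pow_mul]; exact hl⟩
  have hxt : ∀ t ∈ T, classSize (x * t) = q ^ b := by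
    intro t ht
    refine (hall _ (hpt t ht)).resolve_left ?_
    intro h
    have h1 := (classSize_one_iff.1 h u).symm
    have h2 := h1.mul_left (hTu t ht).inv_left
    rw [mul_inv_cancel_right] at h2
    exact hxu 1 (by rwa [cj_one])
  set Y : Subgroup G := (Cz (x : G ⧸ T)).comap (QuotientGroup.mk' T) with hYdef
  have hYm : ∀ g ∈ Y, Commute (g : G ⧸ T) (x : G ⧸ T) := fun g hg => mem_Cz.1 hg
  have hle : ∀ t ∈ T, Cz (x * t) ≤ Y := by
    intro t ht g hg
    rw [mem_Cz] at hg
    show (g : G ⧸ T) ∈ Cz _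
    rw [mem_Cz, ← hmk t ht]
    exact hg.map (QuotientGroup.mk' T)
  let _ := fibreAction T x Y hYm
  obtain ⟨Q⟩ : Nonempty (Sylow q Y) := inferInstance
  have hcard : Nat.card {y : G // (y : G ⧸ T) = (x : G ⧸ T)} = Nat.card T := by
    apply Nat.card_congr
    refine ⟨fun y => ⟨x⁻¹ * y, QuotientGroup.eq.1 y.2.symm⟩, fun t => ⟨x * t, hmk t t.2⟩, ?_, ?_⟩
    · intro y; simp
    · intro y; simp
  have hnd : ¬ q ∣ Nat.card {y : G // (y : G ⧸ T) = (x : G ⧸ T)} := by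
    rw [hcard]
    obtain ⟨n, hn⟩ := IsPGroup.iff_card.1 (isPGroup_of_forall hp hT)
    rw [hn]
    intro hd
    exact hpq ((Nat.prime_dvd_prime_iff_eq hq hp).1 (hq.dvd_of_dvd_pow hd)).symm
  obtain ⟨⟨y, hy⟩, hfix⟩ := Q.2.nonempty_fixed_point_of_prime_not_dvd_card _ hnd
  have ht0 : x⁻¹ * y ∈ T := QuotientGroup.eq.1 hy.symm
  have hyx : x * (x⁻¹ * y) = y := by simp
  have hQ : (Q : Subgroup Y) ≤ (Cz y).subgroupOf Y := by
    intro g hg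
    have h1 := hfix ⟨g, hg⟩
    have h2 : cj (g : G) y = y := congrArg Subtype.val h1
    rw [Subgroup.mem_subgroupOf, mem_Cz]
    exact cj_fix_iff.1 h2
  have hcy : classSize y = q ^ b := by rw [← hxt _ ht0, hyx]
  have hyY : Cz y ≤ Y := by have := hle _ ht0; rwa [hyx] at this
  have hrel : (Cz y).relIndex Y = 1 := by
    have h1 : (Cz y).relIndex Y ∣ q ^ b := by
      rw [← hcy]; exact Subgroup.relIndex_dvd_index_of_le hyY
    obtain ⟨m, _, hm⟩ := (Nat.dvd_prime_pow hq).1 h1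
    rcases Nat.eq_zero_or_pos m with h0 | h0
    · rw [hm, h0, pow_zero]
    · exfalso
      have h2 : (Cz y).relIndex Y ∣ (Q : Subgroup Y).index := Subgroup.index_dvd_of_le hQ
      rw [hm] at h2
      exact Q.not_dvd_index ((dvd_pow_self q h0.ne').trans h2)
  have hYind : Y.index = q ^ b := by
    rw [← hcy]
    have := Subgroup.relIndex_mul_index hyY
    rw [hrel, one_mul] at this
    exact this
  have hqb : q ^ b ≠ 0 := pow_ne_zero _ hq.ne_zero
  have hYle : ∀ t ∈ T, Y ≤ Cz (x * t) := by
    intro t ht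
    have h1 := Subgroup.relIndex_mul_index (hle t ht)
    have h2 : (Cz (x * t)).index = q ^ b := hxt t ht
    rw [hYind, h2] at h1
    exact Subgroup.relIndex_eq_one.1 (Nat.eq_of_mul_eq_mul_right (Nat.pos_of_ne_zero hqb)
      (by rw [h1, one_mul]))
  have hCx : Cz x ≤ Cz t1 := by
    intro g hg
    have h1 : g ∈ Y := by have := hle 1 (one_mem T); rw [mul_one] at this; exact this hg
    have h2 := mem_Cz.1 (hYle t1 ht1 h1)
    rw [mem_Cz] at *
    have := hg.inv_right.mul_right h2
    rwa [inv_mul_cancel_left] at this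
  have ht1cs : classSize t1 = q ^ b := (hall _ (hT _ ht1)).resolve_left ht1c
  have hCt : Cz t1 ≤ Cz x := by
    have h1 := Subgroup.relIndex_mul_index hCx
    have h2 : (Cz x).index = q ^ b := by have := hxt 1 (one_mem T); rw [mul_one] at this; exact this
    have h3 : (Cz t1).index = q ^ b := ht1cs
    rw [h2, h3] at h1
    exact Subgroup.relIndex_eq_one.1 (Nat.eq_of_mul_eq_mul_right (Nat.pos_of_ne_zero hqb)
      (by rw [h1, one_mul]))
  have := mem_Cz.1 (hCt (mem_Cz.2 (hTu t1 ht1).symm))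
  exact hxu 1 (by rw [cj_one]; exact this.symm)

lemma commute_normalClosure {u f : G} (h : ∀ c, Commute f (cj c u)) :
    ∀ m ∈ Subgroup.normalClosure ({u} : Set G), Commute f m := by
  have : Subgroup.normalClosure ({u} : Set G) ≤ Cz f := by
    unfold Subgroup.normalClosure
    rw [Subgroup.closure_le]
    intro y hy
    rw [Group.mem_conjugatesOfSet_iff] at hy
    obtain ⟨a, ha, hay⟩ := hy
    rw [Set.mem_singleton_iff] at ha
    subst ha
    obtain ⟨c, hc⟩ := isConj_iff.1 hay
    rw [← hc]
    exact mem_Cz.2 (h c).symm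
  intro m hm
  exact (mem_Cz.1 (this hm)).symm

lemma relIndex_dvd_of_normal_right (M C : Subgroup G) [M.Normal] : C.relIndex M ∣ C.index := by
  have h1 := Subgroup.relIndex_mul_relIndex (H := M ⊓ C) (K := M) (L := M ⊔ C) inf_le_left
    le_sup_left
  have h2 := Subgroup.relIndex_mul_relIndex (H := M ⊓ C) (K := C) (L := M ⊔ C) inf_le_right
    le_sup_right
  rw [inf_relIndex_left, relIndex_sup_left] at h1
  rw [inf_relIndex_right, ← h1, mul_comm] at h2
  have h0 : M.relIndex C ≠ 0 := Subgroup.index_ne_zero_of_finite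
  have h3 := Nat.eq_of_mul_eq_mul_right (Nat.pos_of_ne_zero h0) h2
  rw [← h3]
  exact Subgroup.relIndex_dvd_index_of_le le_sup_right

lemma beta {p q a b : ℕ} (hp : p.Prime) (hq : q.Prime) (hpq : p ≠ q) (ha : 1 ≤ a) (hb : 1 ≤ b)
    (hallp : ∀ x : G, IsPElement p x → classSize x = 1 ∨ classSize x = q ^ b)
    (hallq : ∀ x : G, IsPElement q x → classSize x = 1 ∨ classSize x = p ^ a)
    {u t : G} (hu : IsPElement q u) (hcu : classSize u = p ^ a)
    (ht : IsPElement p t) (hct : classSize t = q ^ b) (hut : Commute t u) : False := by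
  have hnp : ∀ x : G, IsPElement p x → ¬ p ∣ classSize x := by
    intro x hx hd
    rcases hallp x hx with h | h
    · rw [h] at hd; exact hp.one_lt.ne' (Nat.dvd_one.1 hd)
    · rw [h] at hd; exact hpq ((Nat.prime_dvd_prime_iff_eq hp hq).1 (hp.dvd_of_dvd_pow hd))
  have hF2 : ∀ x : G, IsPElement p x → (∃ c, Commute x (cj c u)) → ∀ c, Commute x (cj c u) := by
    rintro x hx ⟨c, hc⟩ d
    have := F2 hp (s := cj c u) (by rw [classSize_cj, hcu]) (hnp x hx) hc (d * c⁻¹)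
    rw [cj_cj] at this
    simpa using this
  set M := Subgroup.normalClosure ({u} : Set G) with hM
  have huM : u ∈ M := Subgroup.subset_normalClosure (Set.mem_singleton u)
  have hcjM : ∀ c, cj c u ∈ M := fun c => Subgroup.Normal.conj_mem inferInstance u huM c
  set N := Subgroup.centralizer (M : Set G) with hN
  have hmemN : ∀ f : G, f ∈ N ↔ ∀ m ∈ M, Commute f m := by
    intro f; rw [hN, Subgroup.mem_centralizer_iff]
    exact ⟨fun h m hm => (h m hm).symm, fun h m hm => (h m hm).symm⟩
  have hNn : N.Normal := by rw [hN]; infer_instance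
  have htN : t ∈ N := (hmemN t).2 (commute_normalClosure (hF2 t ht ⟨1, by rwa [cj_one]⟩))
  let T : Subgroup G :=
    { carrier := {z | z ∈ M ∧ z ∈ N ∧ IsPElement p z}
      one_mem' := ⟨one_mem _, one_mem _, isPElement_one p⟩
      mul_mem' := by
        rintro x y ⟨h1, h2, h3⟩ ⟨h4, h5, h6⟩
        exact ⟨mul_mem h1 h4, mul_mem h2 h5, h3.mul hp h6 ((hmemN x).1 h2 y h4)⟩
      inv_mem' := by
        rintro x ⟨h1, h2, h3⟩
        exact ⟨inv_mem h1, inv_mem h2, h3.inv⟩ }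
  have hTn : T.Normal := ⟨by
    rintro x ⟨h1, h2, h3⟩ g
    exact ⟨Subgroup.Normal.conj_mem inferInstance x h1 g, hNn.conj_mem x h2 g, h3.cj g⟩⟩
  by_cases hTc : ∃ t1 ∈ T, classSize t1 ≠ 1
  · obtain ⟨t1, ht1, ht1c⟩ := hTc
    exact beta1 hp hq hpq ha hallp hcu T (fun t h => h.2.2) (fun t h => (hmemN t).1 h.2.1 u huM)
      ht1 ht1c
  push Not at hTc
  have hMp : ∀ x ∈ M, IsPElement p x → x ∈ Cz u := by
    intro x hxM hx
    have hxt : Commute x t := ((hmemN t).1 htN x hxM).symm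
    have hD : ∀ g ∈ Cz (x * t), IsPElement q g → g ∈ Cz x ⊓ Cz t := by
      intro g hg hgq
      rw [mem_Cz] at hg
      have e1 : cj g x * cj g t = x * t := by rw [← cj_mul, cj_fix hg]
      set z := cj g t * t⁻¹ with hz
      have hzt : cj g t = z * t := by simp [hz]
      have hz2 : z = (cj g x)⁻¹ * x := by
        rw [hz, mul_inv_eq_iff_eq_mul, mul_assoc, ← e1]; simp
      have hzM : z ∈ M := by
        rw [hz2]
        exact mul_mem (inv_mem (Subgroup.Normal.conj_mem inferInstance x hxM g)) hxM
      have hzN : z ∈ N := mul_mem (hNn.conj_mem t htN g) (inv_mem htN)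
      have hzt' : Commute t z := (hmemN t).1 htN z hzM
      have hzp : IsPElement p z := by
        rw [hz]
        refine (ht.cj g).mul hp ht.inv ?_
        rw [hzt]
        exact ((hzt'.symm).mul_left (Commute.refl t)).inv_right
      have hzc : ∀ y, Commute y z := classSize_one_iff.1 (hTc z ⟨hzM, hzN, hzp⟩)
      have hpow : ∀ n : ℕ, cj (g ^ n) t = z ^ n * t := by
        intro n
        induction n with
        | zero => simp [cj_one]
        | succ n ih =>
          rw [pow_succ', ← cj_cj, ih, cj_mul, cj_fix ((hzc g).pow_right n), pow_succ,
            mul_assoc (z ^ n) z t, ← hzt]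
      have h1 := hpow (orderOf g)
      rw [pow_orderOf_eq_one, cj_one] at h1
      have h2 : z ^ orderOf g = 1 := by simpa using h1.symm
      have h3 : z = 1 := by
        rw [← orderOf_eq_one_iff]
        exact Nat.eq_one_of_dvd_coprimes (hzp.coprime' hp hq hpq hgq) dvd_rfl
          (orderOf_dvd_of_pow_eq_one h2)
      have h4 : Commute g t := cj_fix_iff.1 (by rw [hzt, h3, one_mul])
      refine ⟨mem_Cz.2 ?_, mem_Cz.2 h4⟩
      have := hg.mul_right h4.inv_right
      simpa using this
    have hxtp : IsPElement p (x * t) := hx.mul hp ht hxt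
    have h1 := factorization_le_of_forall hq hD
    have h2 := classSize_factorization_add q (x * t)
    have h3 := classSize_factorization_add q t
    have h4 : (classSize (x * t)).factorization q ≤ (classSize t).factorization q := by
      rcases hallp _ hxtp with h | h
      · rw [h]; simp
      · rw [h, hct]
    have h5 := not_dvd_relIndex hq (D := Cz x ⊓ Cz t) (E := Cz t) inf_le_right (by omega)
    obtain ⟨c, -, hc⟩ := conj_into hq h5 (mem_Cz.2 hut.symm) hu
    have := hF2 x hx ⟨c, (mem_Cz.1 hc.1).symm⟩ 1
    rw [cj_one] at this
    exact mem_Cz.2 this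
  have h1 := factorization_le_of_forall hp (D := Cz u ⊓ M) (H := M)
    (fun x hx hxp => ⟨hMp x hx hxp, hx⟩)
  have h2 := not_dvd_relIndex hp inf_le_right h1
  rw [inf_relIndex_right] at h2
  have h3 := relIndex_dvd_of_normal_right M (Cz u)
  have h4 : (Cz u).index = p ^ a := hcu
  rw [h4] at h3
  obtain ⟨m, -, hm⟩ := (Nat.dvd_prime_pow hp).1 h3
  have hm0 : m = 0 := by
    by_contra h
    exact h2 (by rw [hm]; exact dvd_pow_self p h)
  rw [hm0, pow_zero, Subgroup.relIndex_eq_one] at hm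
  have hMu : ∀ x ∈ M, ∀ c, Commute x (cj c u) := by
    intro x hx c
    have := mem_Cz.1 (hm (Subgroup.Normal.conj_mem inferInstance x hx c⁻¹))
    rw [← @cj_commute_iff _ _ c⁻¹, cj_inv_cj]
    exact this
  have hMab : ∀ x ∈ M, ∀ y ∈ M, Commute x y := fun x hx => commute_normalClosure (hMu x hx)
  let Mq : Subgroup G :=
    { carrier := {z | z ∈ M ∧ IsPElement q z}
      one_mem' := ⟨one_mem _, isPElement_one q⟩
      mul_mem' := by
        rintro x y ⟨h1, h2⟩ ⟨h4, h5⟩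
        exact ⟨mul_mem h1 h4, h2.mul hq h5 (hMab x h1 y h4)⟩
      inv_mem' := by
        rintro x ⟨h1, h3⟩
        exact ⟨inv_mem h1, h3.inv⟩ }
  have hMqn : Mq.Normal := ⟨by
    rintro x ⟨h1, h2⟩ g
    exact ⟨Subgroup.Normal.conj_mem inferInstance x h1 g, h2.cj g⟩⟩
  refine beta1 (G := G) hq hp hpq.symm hb hallq hct Mq (fun t h => h.2)
    (fun s h => ((hmemN t).1 htN s h.1).symm) (t1 := u) ⟨huM, hu⟩ ?_
  rw [hcu]
  exact (Nat.one_lt_pow (by omega) hp.one_lt).ne'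

end Beta


open Subgroup

set_option linter.unusedSectionVars false

section PropX
variable {G : Type*} [Group G] [Finite G]

lemma claimA {p q r a : ℕ} (hp : p.Prime) (hq : q.Prime) (hr : r.Prime) (hrp : r ≠ p)
    (ha : 1 ≤ a) {u w : G} (hu : IsPElement q u) (hcu : classSize u = p ^ a)
    (hw : IsPElement r w) (hpw : ¬ p ∣ classSize w)
    (hv : ∀ z, IsPElement p z → Commute z w →
      (classSize (z * w)).factorization q = (classSize w).factorization q) : False := by
  obtain ⟨x, hx, hxu⟩ := cov hp ha hcu
  obtain ⟨c, hc⟩ := F1 hp hpw hx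
  have h1 : ¬ r ∣ classSize u := by
    rw [hcu]; intro hd
    exact hrp ((Nat.prime_dvd_prime_iff_eq hr hp).1 (hr.dvd_of_dvd_pow hd))
  obtain ⟨d, hd⟩ := F1' hr h1 hw
  obtain ⟨e, -, he⟩ := keyTool hq hc ((hx.cj c).coprime' hp hr hrp.symm hw) (hv _ (hx.cj c) hc)
    (hu.cj d) hd.symm
  rw [cj_cj, ← @cj_commute_iff _ _ c⁻¹, cj_inv_cj, cj_cj] at he
  exact hxu _ he.symm

lemma Cz_le_of_eq {x y : G} (h : Cz x ≤ Cz y) (he : classSize x = classSize y) : Cz y ≤ Cz x := by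
  have h1 := Subgroup.relIndex_mul_index h
  have h2 : (Cz x).index = (Cz y).index := he
  rw [h2] at h1
  exact Subgroup.relIndex_eq_one.1 (Nat.eq_of_mul_eq_mul_right
    (Nat.pos_of_ne_zero (classSize_ne_zero y)) (by rw [one_mul]; exact h1))

lemma classSize_mul_central {x y : G} (h : classSize x = 1) : classSize (x * y) = classSize y := by
  have : Cz (x * y) = Cz y := by
    ext z
    rw [mem_Cz, mem_Cz]
    have hx := classSize_one_iff.1 h z
    constructor
    · intro hz
      have := hx.inv_right.mul_right hz
      rwa [inv_mul_cancel_left] at this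
    · intro hz; exact hx.mul_right hz
  unfold classSize
  unfold Cz at this
  rw [this]

lemma fact_left {p q : ℕ} (hp : p.Prime) (hq : q.Prime) (hpq : p ≠ q) (a b : ℕ) :
    (p ^ a * q ^ b).factorization p = a := by
  rw [Nat.factorization_mul (pow_ne_zero _ hp.ne_zero) (pow_ne_zero _ hq.ne_zero),
    hp.factorization_pow, hq.factorization_pow]
  simp [hpq.symm]

lemma fact_right {p q : ℕ} (hp : p.Prime) (hq : q.Prime) (hpq : p ≠ q) (a b : ℕ) :
    (p ^ a * q ^ b).factorization q = b := by
  rw [mul_comm]; exact fact_left hq hp hpq.symm b a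

lemma fact_pow_self {p : ℕ} (hp : p.Prime) (a : ℕ) : (p ^ a).factorization p = a := by
  rw [hp.factorization_pow]; simp

lemma fact_pow_ne {p q : ℕ} (hp : p.Prime) (hpq : p ≠ q) (a : ℕ) :
    (p ^ a).factorization q = 0 := by
  rw [hp.factorization_pow]; simp [hpq]

lemma not_dvd_pow_ne {p q : ℕ} (hp : p.Prime) (hq : q.Prime) (hpq : p ≠ q) (b : ℕ) :
    ¬ p ∣ q ^ b := fun hd => hpq ((Nat.prime_dvd_prime_iff_eq hp hq).1 (hp.dvd_of_dvd_pow hd))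

structure PX (p q a b : ℕ) (G : Type*) [Group G] : Prop where
  hp : p.Prime
  hq : q.Prime
  hpq : p ≠ q
  ha : 1 ≤ a
  hb : 1 ≤ b
  H : ∀ y s : G, IsPElement p y → IsPElement q s → Commute y s →
    classSize (y * s) = 1 ∨ classSize (y * s) = p ^ a ∨ classSize (y * s) = q ^ b ∨
      classSize (y * s) = p ^ a * q ^ b
  hu : ∃ u : G, IsPElement q u ∧ classSize u = p ^ a
  hv : ∃ v : G, IsPElement p v ∧ classSize v = q ^ b

lemma PX.symm {p q a b : ℕ} (h : PX p q a b G) : PX q p b a G where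
  hp := h.hq
  hq := h.hp
  hpq := h.hpq.symm
  ha := h.hb
  hb := h.ha
  H := by
    intro y s hy hs hc
    have := h.H s y hs hy hc.symm
    rw [hc.eq, mul_comm (q ^ b)]
    tauto
  hu := h.hv
  hv := h.hu

lemma PX.qel {p q a b : ℕ} (h : PX p q a b G) {s : G} (hs : IsPElement q s) :
    classSize s = 1 ∨ classSize s = p ^ a ∨ classSize s = p ^ a * q ^ b := by
  have h1 := h.H 1 s (isPElement_one p) hs (Commute.one_left s)
  rw [one_mul] at h1
  rcases h1 with h1 | h1 | h1 | h1
  · exact Or.inl h1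
  · exact Or.inr (Or.inl h1)
  · exfalso
    obtain ⟨u, hu, hcu⟩ := h.hu
    refine claimA h.hp h.hq h.hq h.hpq.symm h.ha hu hcu hs ?_ ?_
    · rw [h1]; exact not_dvd_pow_ne h.hp h.hq h.hpq b
    · intro z hz hzs
      have hd := classSize_dvd_mul_right hzs (hz.coprime' h.hp h.hq h.hpq hs)
      rw [h1] at hd ⊢
      rw [fact_pow_self h.hq]
      have hb := h.hb
      have hd1 : q ∣ q ^ b := dvd_pow_self q (by omega)
      rcases h.H z s hz hs hzs with h2 | h2 | h2 | h2
      · rw [h2] at hd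
        exact absurd (Nat.dvd_one.1 (hd1.trans hd)) h.hq.one_lt.ne'
      · rw [h2] at hd
        exact absurd (hd1.trans hd) (not_dvd_pow_ne h.hq h.hp h.hpq.symm a)
      · rw [h2, fact_pow_self h.hq]
      · rw [h2, fact_right h.hp h.hq h.hpq]
  · exact Or.inr (Or.inr h1)

lemma PX.pel {p q a b : ℕ} (h : PX p q a b G) {s : G} (hs : IsPElement p s) :
    classSize s = 1 ∨ classSize s = q ^ b ∨ classSize s = p ^ a * q ^ b := by
  rw [mul_comm]; exact h.symm.qel hs

lemma PX.L1 {p q a b : ℕ} (h : PX p q a b G) {z s g : G} (hz : IsPElement p z)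
    (hcz : classSize z = p ^ a * q ^ b) (hs : IsPElement q s) (hsz : Commute s z)
    (hg : Commute g z) : Commute g s := by
  have hcop := hz.coprime' h.hp h.hq h.hpq hs
  have hd := classSize_dvd_mul_left hsz.symm hcop
  have hp1 : 1 < p ^ a := Nat.one_lt_pow (by have := h.ha; omega) h.hp.one_lt
  have hq1 : 1 < q ^ b := Nat.one_lt_pow (by have := h.hb; omega) h.hq.one_lt
  have hle := Nat.le_of_dvd (Nat.pos_of_ne_zero (classSize_ne_zero _)) hd
  have he : classSize (z * s) = classSize z := by
    rw [hcz] at hle ⊢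
    rcases h.H z s hz hs hsz.symm with h2 | h2 | h2 | h2
    · nlinarith
    · nlinarith
    · nlinarith
    · exact h2
  have hCz := Cz_mul hsz.symm hcop
  have h1 : Cz z ≤ Cz (z * s) := Cz_le_of_eq (by rw [hCz]; exact inf_le_left) he
  rw [hCz] at h1
  exact mem_Cz.1 (h1 (mem_Cz.2 hg)).2

lemma PX.star {p q a b : ℕ} (h : PX p q a b G) {z u v : G} (hz : IsPElement p z)
    (hcz : classSize z = p ^ a * q ^ b) (hu : IsPElement q u)
    (hcv : classSize v = q ^ b) (huv : Commute u v) :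
    ∃ c, Commute z (cj c u) := by
  obtain ⟨d, hd⟩ := F1' h.hp (s := v) (by rw [hcv]; exact not_dvd_pow_ne h.hp h.hq h.hpq b) hz
  have hD : ∀ s ∈ Cz z, IsPElement q s → s ∈ Cz z ⊓ Cz (cj d v) := by
    intro s hs hsq
    exact ⟨hs, mem_Cz.2 (h.L1 hz hcz hsq (mem_Cz.1 hs) hd.symm).symm⟩
  have h1 := factorization_le_of_forall h.hq hD
  have h2 := classSize_factorization_add q z
  have h3 := classSize_factorization_add q (cj d v)
  rw [hcz, fact_right h.hp h.hq h.hpq] at h2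
  rw [classSize_cj, hcv, fact_pow_self h.hq] at h3
  have h5 := not_dvd_relIndex h.hq (D := Cz z ⊓ Cz (cj d v)) (E := Cz (cj d v)) inf_le_right
    (by omega)
  obtain ⟨e, -, he⟩ := conj_into h.hq h5 (x := cj d u) (mem_Cz.2 (cj_commute_iff.2 huv)) (hu.cj d)
  rw [cj_cj] at he
  exact ⟨_, (mem_Cz.1 he.1).symm⟩

lemma PX.stepi {p q a b : ℕ} (h : PX p q a b G) {y u : G} (hy : IsPElement p y)
    (hcy : classSize y = p ^ a * q ^ b) (hu : IsPElement q u) (hcu : classSize u = p ^ a)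
    (hyu : Commute y u) : False := by
  obtain ⟨z, hz, hzu⟩ := cov h.hp h.ha hcu
  rcases h.pel hz with h1 | h1 | h1
  · exact hzu 1 (classSize_one_iff.1 h1 _).symm
  · obtain ⟨c, hc⟩ := F1' h.hp (s := z) (by rw [h1]; exact not_dvd_pow_ne h.hp h.hq h.hpq b) hy
    have h2 := h.L1 hy hcy hu hyu.symm hc.symm
    rw [← @cj_commute_iff _ _ c⁻¹, cj_inv_cj] at h2
    exact hzu _ h2
  · obtain ⟨v, hv, hcv⟩ := h.hv
    obtain ⟨c, hc⟩ := F1' h.hp (s := v) (by rw [hcv]; exact not_dvd_pow_ne h.hp h.hq h.hpq b) hy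
    have h2 := h.L1 hy hcy hu hyu.symm hc.symm
    obtain ⟨e, he⟩ := h.star hz h1 hu (v := cj c v) (by rw [classSize_cj, hcv]) h2.symm
    exact hzu e he

lemma PX.pel' {p q a b : ℕ} (h : PX p q a b G) {u v : G} (hu : IsPElement q u)
    (hcu : classSize u = p ^ a) (hcv : classSize v = q ^ b)
    (huv : Commute u v) {z : G} (hz : IsPElement p z) : classSize z = 1 ∨ classSize z = q ^ b := by
  rcases h.pel hz with h1 | h1 | h1
  · exact Or.inl h1
  · exact Or.inr h1
  · exfalso
    obtain ⟨c, hc⟩ := h.star hz h1 hu hcv huv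
    exact h.stepi hz h1 (hu.cj c) (by rw [classSize_cj, hcu]) hc

lemma PX.stepii {p q a b : ℕ} (h : PX p q a b G) {u v : G} (hu : IsPElement q u)
    (hcu : classSize u = p ^ a) (hv : IsPElement p v) (hcv : classSize v = q ^ b)
    (huv : Commute u v) : False :=
  beta h.hp h.hq h.hpq h.ha h.hb (fun _ hz => h.pel' hu hcu hcv huv hz)
    (fun _ hz => h.symm.pel' hv hcv hcu huv.symm hz) hu hcu hv hcv huv.symm

lemma PX.stepiii {p q a b : ℕ} (h : PX p q a b G) {y : G} (hy : IsPElement p y)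
    (hcy : classSize y = p ^ a * q ^ b) : False := by
  obtain ⟨u, hu, hcu⟩ := h.hu
  have hD : ∀ t ∈ Cz u, IsPElement p t → t ∈ Cz u ⊓ Cz y := by
    intro t ht htp
    refine ⟨ht, ?_⟩
    rcases h.pel htp with h1 | h1 | h1
    · exact mem_Cz.2 (classSize_one_iff.1 h1 y).symm
    · exact (h.stepii hu hcu htp h1 (mem_Cz.1 ht).symm).elim
    · exact (h.stepi htp h1 hu hcu (mem_Cz.1 ht)).elim
  have h1 := factorization_le_of_forall h.hp hD
  have h2 := classSize_factorization_add p y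
  have h3 := classSize_factorization_add p u
  rw [hcy, fact_left h.hp h.hq h.hpq] at h2
  rw [hcu, fact_pow_self h.hp] at h3
  have h5 := not_dvd_relIndex h.hp (D := Cz u ⊓ Cz y) (E := Cz y) inf_le_right (by omega)
  obtain ⟨e, he1, he⟩ := conj_into h.hp h5 (x := y) (mem_Cz.2 (Commute.refl y)) hy
  rw [cj_fix (mem_Cz.1 he1)] at he
  exact h.stepi hy hcy hu hcu (mem_Cz.1 he.1)

lemma PX.final {p q a b : ℕ} (h : PX p q a b G) {y s : G} (hy : IsPElement p y)
    (hs : IsPElement q s) (hc : Commute y s) (hcs : classSize (y * s) = p ^ a * q ^ b) :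
    False := by
  have hp1 : 1 < p ^ a := Nat.one_lt_pow (by have := h.ha; omega) h.hp.one_lt
  have hq1 : 1 < q ^ b := Nat.one_lt_pow (by have := h.hb; omega) h.hq.one_lt
  rcases h.pel hy with h1 | h1 | h1
  · rw [classSize_mul_central h1] at hcs
    exact h.symm.stepiii hs (by rw [hcs, mul_comm])
  · rcases h.qel hs with h2 | h2 | h2
    · rw [hc.eq, classSize_mul_central h2, h1] at hcs
      nlinarith
    · exact h.stepii hs h2 hy h1 hc.symm
    · exact h.symm.stepiii hs (by rw [h2, mul_comm])
  · exact h.stepiii hy h1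

end PropX


open Subgroup

set_option linter.unusedSectionVars false

section Pairing
variable {G : Type*} [Group G] [Finite G]

def Sing (α : ℕ → ℕ) (k j : ℕ) (s : G) : Prop :=
  k.Prime ∧ j.Prime ∧ IsPElement j s ∧ 1 ≤ α k ∧ classSize s = k ^ α k

structure Hyp (α : ℕ → ℕ) (G : Type*) [Group G] : Prop where
  R : ∀ p : ℕ, p.Prime → ∀ x : G, p ∣ classSize x → (classSize x).factorization p = α p
  E : ∀ p : ℕ, p.Prime → (∃ x : G, p ∣ classSize x) → ∃ j, ∃ u : G, Sing α p j u
  H2 : ∀ p q : ℕ, p.Prime → q.Prime → p ≠ q → (∃ x : G, p ∣ classSize x) →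
    (∃ x : G, q ∣ classSize x) → ∃ h : G, classSize h = p ^ α p * q ^ α q

variable {α : ℕ → ℕ}

lemma Sing.cj {k j : ℕ} {s : G} (h : Sing α k j s) (c : G) : Sing α k j (cj c s) :=
  ⟨h.1, h.2.1, h.2.2.1.cj c, h.2.2.2.1, by rw [classSize_cj]; exact h.2.2.2.2⟩

lemma Sing.dvd {k j : ℕ} {s : G} (h : Sing α k j s) : k ∣ classSize s := by
  rw [h.2.2.2.2]; exact dvd_pow_self k (by have := h.2.2.2.1; omega)

lemma Sing.prime_dvd_iff {k j : ℕ} {s : G} (h : Sing α k j s) {r : ℕ} (hr : r.Prime) :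
    r ∣ classSize s ↔ r = k := by
  constructor
  · intro hd; rw [h.2.2.2.2] at hd
    exact (Nat.prime_dvd_prime_iff_eq hr h.1).1 (hr.dvd_of_dvd_pow hd)
  · rintro rfl; exact h.dvd

lemma Hyp.eqv (hy : Hyp α G) {k : ℕ} (hk : k.Prime) {x y : G} (h : classSize x ∣ classSize y)
    (hx : k ∣ classSize x) : (classSize y).factorization k = (classSize x).factorization k := by
  rw [hy.R k hk x hx, hy.R k hk y (hx.trans h)]

lemma pairA {p q : ℕ} {u : G} (h : Sing α p q u) : ∃ x : G, q ∣ classSize x := by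
  obtain ⟨x, hx, hxu⟩ := cov h.1 h.2.2.2.1 h.2.2.2.2
  refine ⟨x, ?_⟩
  by_contra hq
  obtain ⟨c, hc⟩ := F1 h.2.1 hq h.2.2.1
  exact hxu c hc.symm

lemma Hyp.pairB (hy : Hyp α G) {p q j : ℕ} {u w : G} (h : Sing α p q u) (hpq : p ≠ q)
    (hw : Sing α q j w) : j = p := by
  by_contra hjp
  refine claimA h.1 h.2.1 hw.2.1 hjp h.2.2.2.1 h.2.2.1 h.2.2.2.2 hw.2.2.1 ?_ ?_
  · rw [hw.prime_dvd_iff h.1]; exact hpq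
  · intro z hz hzw
    apply hy.eqv h.2.1 _ hw.dvd
    exact classSize_dvd_mul_right hzw (hz.coprime' h.1 hw.2.1 (Ne.symm hjp) hw.2.2.1)

/-- every pair has a partner -/
lemma Hyp.partner (hy : Hyp α G) {p q : ℕ} {u : G} (h : Sing α p q u) (hpq : p ≠ q) :
    ∃ v : G, Sing α q p v := by
  obtain ⟨j, w, hw⟩ := hy.E q h.2.1 (pairA h)
  have := hy.pairB h hpq hw
  subst this
  exact ⟨w, hw⟩

lemma Hyp.pairC (hy : Hyp α G) {p q j : ℕ} {u w : G} (h : Sing α p q u) (hpq : p ≠ q)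
    (hw : Sing α p j w) : j = q := by
  obtain ⟨v, hv⟩ := hy.partner h hpq
  exact hy.pairB hv hpq.symm hw

lemma Hyp.pairD (hy : Hyp α G) {p k : ℕ} {u s : G} (h : Sing α p p u) (hs : Sing α k p s) :
    k = p := by
  by_contra hk
  exact hk (hy.pairB hs hk h).symm

lemma Hyp.pairE (hy : Hyp α G) {p j : ℕ} {u s : G} (h : Sing α p p u) (hs : Sing α p j s) :
    j = p := by
  by_contra hj
  exact hj (hy.pairC hs (Ne.symm hj) h).symm

lemma Hyp.pairF (hy : Hyp α G) {k r j : ℕ} {u s : G} (h : Sing α k j u) (hs : Sing α r j s) :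
    r = k := by
  by_cases hkj : k = j
  · subst hkj; exact hy.pairD h hs
  by_cases hrj : r = j
  · subst hrj; exact (hy.pairD hs h).symm
  obtain ⟨v, hv⟩ := hy.partner h hkj
  exact (hy.pairB hs hrj hv).symm

/-- an element of `r`-power order, `r ≠ k`, commutes with all conjugates of singular elements as
soon as `k` does not divide its class size -/
lemma Sing.comm {k j r : ℕ} {s f : G} (h : Sing α k j s) (hr : r.Prime) (hrk : r ≠ k)
    (hf : IsPElement r f) (hkf : ¬ k ∣ classSize f) : Commute f s := by
  obtain ⟨c, hc⟩ := F1' hr (by rw [h.prime_dvd_iff hr]; exact hrk) hf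
  have := F2 h.1 (s := _root_.cj c s) (by rw [classSize_cj]; exact h.2.2.2.2) hkf hc c⁻¹
  rwa [cj_inv_cj] at this

lemma Hyp.nonB (hy : Hyp α G) {k k' j : ℕ} {e e' f : G} (he : Sing α k k' e)
    (he' : Sing α k' k e') (hkk : k ≠ k')
    (hno : ∀ e e' : G, Sing α k k' e → Sing α k' k e' → ¬ Commute e e')
    (hj : j.Prime) (hjk : j ≠ k) (hjk' : j ≠ k') (hf : IsPElement j f) : ¬ k ∣ classSize f := by
  intro hd
  obtain ⟨c, hc⟩ := F1' hj (by rw [he.prime_dvd_iff hj]; exact hjk) hf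
  obtain ⟨d, hd'⟩ := F1' hj (by rw [he'.prime_dvd_iff hj]; exact hjk') hf
  have hcop := (he.cj c).2.2.1.coprime' he.2.1 hj hjk'.symm hf
  obtain ⟨b, -, hb⟩ := keyTool he.1 hc.symm hcop
    (hy.eqv he.1 (classSize_dvd_mul_right hc.symm hcop) hd) (he'.cj d).2.2.1 hd'.symm
  exact hno _ _ (he.cj c) ((he'.cj d).cj b) hb.symm

lemma relIndex_of_coprime {H K : Subgroup G} (h : H.index.Coprime K.index) :
    K.relIndex H = K.index := by
  have h1 : (H ⊓ K).index = H.index * K.index := by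
    apply le_antisymm (Subgroup.index_inf_le)
    exact Nat.le_of_dvd (Nat.pos_of_ne_zero Subgroup.index_ne_zero_of_finite)
      (h.mul_dvd_of_dvd_of_dvd (Subgroup.index_dvd_of_le inf_le_left)
      (Subgroup.index_dvd_of_le inf_le_right))
  have := Subgroup.relIndex_mul_index (H := H ⊓ K) (K := H) inf_le_left
  rw [h1, inf_relIndex_left, mul_comm] at this
  exact Nat.eq_of_mul_eq_mul_left (Nat.pos_of_ne_zero Subgroup.index_ne_zero_of_finite) this

lemma classSize_mul_eq {x y : G} (hc : Commute x y) (ho : (orderOf x).Coprime (orderOf y)) :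
    classSize (x * y) = (Cz y).relIndex (Cz x) * classSize x := by
  have h1 := Cz_mul hc ho
  have h2 := Subgroup.relIndex_mul_index (H := Cz x ⊓ Cz y) (K := Cz x) inf_le_left
  rw [inf_relIndex_left, ← h1] at h2
  exact h2.symm

lemma classSize_mul_coprime {x y : G} (hc : Commute x y) (ho : (orderOf x).Coprime (orderOf y))
    (h : (classSize x).Coprime (classSize y)) :
    classSize (x * y) = classSize x * classSize y := by
  rw [classSize_mul_eq hc ho, relIndex_of_coprime h, mul_comm]; rfl

structure Mask (α : ℕ → ℕ) (p : ℕ) (g : G) : Prop where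
  a : ∀ r : ℕ, r.Prime → r ∣ orderOf g → r ∣ classSize g
  b : ∀ r j : ℕ, ∀ s : G, Sing α r j s → (r ∣ classSize g ↔ j ∣ classSize g)
  c : ¬ p ∣ classSize g
  d : ∀ j : ℕ, j.Prime → ¬ j ∣ classSize g → ∀ f : G, IsPElement j f →
    (∀ k : ℕ, k.Prime → k ∣ classSize g → ¬ k ∣ classSize f) → Commute f g

lemma mask_one {p : ℕ} (hp : p.Prime) : Mask α p (1 : G) := by
  have h1 : classSize (1 : G) = 1 := classSize_one_iff.2 (fun y => Commute.one_right y)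
  refine ⟨?_, ?_, ?_, ?_⟩
  · intro r hr h; rw [orderOf_one] at h; rwa [h1]
  · intro r j s hs
    rw [h1, Nat.dvd_one, Nat.dvd_one]
    exact ⟨fun h => absurd h hs.1.one_lt.ne', fun h => absurd h hs.2.1.one_lt.ne'⟩
  · rw [h1, Nat.dvd_one]; exact hp.one_lt.ne'
  · intro j _ _ f _ _; exact Commute.one_right f

lemma Mask.orderOf_coprime {p : ℕ} {g : G} (hg : Mask α p g) {n : ℕ} 
    (h : ∀ r : ℕ, r.Prime → r ∣ n → ¬ r ∣ classSize g) : (orderOf g).Coprime n :=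
  Nat.coprime_of_dvd (fun r hr h1 h2 => h r hr h2 (hg.a r hr h1))

lemma Mask.mul {p : ℕ} (hp : p.Prime) {g m : G} (hg : Mask α p g) (hm : Mask α p m)
    (hc : Commute g m)
    (h : (classSize g).Coprime (classSize m)) :
    Mask α p (g * m) ∧ classSize (g * m) = classSize g * classSize m := by
  have ho : (orderOf g).Coprime (orderOf m) := by
    apply hg.orderOf_coprime
    intro r hr h1 h2
    exact Nat.not_coprime_of_dvd_of_dvd hr.one_lt h2 (hm.a r hr h1) h
  have hcs := classSize_mul_coprime hc ho h
  refine ⟨⟨?_, ?_, ?_, ?_⟩, hcs⟩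
  · intro r hr hd
    rw [hc.orderOf_mul_eq_mul_orderOf_of_coprime ho, hr.dvd_mul] at hd
    rw [hcs, hr.dvd_mul]
    exact hd.imp (hg.a r hr) (hm.a r hr)
  · intro r j s hs
    rw [hcs, hs.1.dvd_mul, hs.2.1.dvd_mul, hg.b r j s hs, hm.b r j s hs]
  · rw [hcs, hp.dvd_mul]
    exact fun h => h.elim hg.c hm.c
  · intro j hj hjd f hf hfd
    rw [hcs] at hjd hfd
    rw [hj.dvd_mul] at hjd
    push Not at hjd
    exact (hg.d j hj hjd.1 f hf (fun k hk h => hfd k hk (h.mul_right _))).mul_right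
      (hm.d j hj hjd.2 f hf (fun k hk h => hfd k hk (h.mul_left _)))

lemma Hyp.mask_single (hy : Hyp α G) {p k : ℕ} (hp : p.Prime) (hpk : p ≠ k) {s : G}
    (hs : Sing α k k s) : Mask α p s := by
  refine ⟨?_, ?_, ?_, ?_⟩
  · intro r hr hd
    obtain ⟨m, hm⟩ := hs.2.2.1
    rw [hm] at hd
    rw [hs.prime_dvd_iff hr]
    exact (Nat.prime_dvd_prime_iff_eq hr hs.1).1 (hr.dvd_of_dvd_pow hd)
  · intro r j w hw
    rw [hs.prime_dvd_iff hw.1, hs.prime_dvd_iff hw.2.1]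
    constructor
    · rintro rfl; exact hy.pairE hs hw
    · rintro rfl; exact hy.pairD hs hw
  · rw [hs.prime_dvd_iff hp]; exact hpk
  · intro j hj hjd f hf hfd
    rw [hs.prime_dvd_iff hj] at hjd
    exact hs.comm hj hjd hf (hfd k hs.1 hs.dvd)

lemma Hyp.mask_pair (hy : Hyp α G) {p k k' : ℕ} (hp : p.Prime) (hpk : p ≠ k) (hpk' : p ≠ k')
    (hkk : k ≠ k') {s s' : G} (hs : Sing α k k' s) (hs' : Sing α k' k s') (hc : Commute s s') :
    Mask α p (s * s') ∧ classSize (s * s') = classSize s * classSize s' := by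
  have ho := hs.2.2.1.coprime' hs.2.1 hs.1 hkk.symm hs'.2.2.1
  have hcop : (classSize s).Coprime (classSize s') := by
    apply Nat.coprime_of_dvd
    intro r hr h1 h2
    rw [hs.prime_dvd_iff hr] at h1
    rw [hs'.prime_dvd_iff hr] at h2
    exact hkk (h1.symm.trans h2)
  have hcs := classSize_mul_coprime hc ho hcop
  have hdiv : ∀ r : ℕ, r.Prime → (r ∣ classSize (s * s') ↔ r = k ∨ r = k') := by
    intro r hr
    rw [hcs, hr.dvd_mul, hs.prime_dvd_iff hr, hs'.prime_dvd_iff hr]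
  refine ⟨⟨?_, ?_, ?_, ?_⟩, hcs⟩
  · intro r hr hd
    rw [hdiv r hr]
    obtain ⟨m, hm⟩ := hs.2.2.1
    obtain ⟨m', hm'⟩ := hs'.2.2.1
    rw [hc.orderOf_mul_eq_mul_orderOf_of_coprime ho, hr.dvd_mul, hm, hm'] at hd
    rcases hd with hd | hd
    · right; exact (Nat.prime_dvd_prime_iff_eq hr hs.2.1).1 (hr.dvd_of_dvd_pow hd)
    · left; exact (Nat.prime_dvd_prime_iff_eq hr hs.1).1 (hr.dvd_of_dvd_pow hd)
  · intro r j w hw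
    rw [hdiv r hw.1, hdiv j hw.2.1]
    constructor
    · rintro (rfl | rfl)
      · right; exact hy.pairC hs hkk hw
      · left; exact hy.pairB hs hkk hw
    · rintro (rfl | rfl)
      · right; exact hy.pairF hs' hw
      · left; exact hy.pairF hs hw
  · rw [hdiv p hp]; rintro (h | h); exacts [hpk h, hpk' h]
  · intro j hj hjd f hf hfd
    rw [hdiv j hj] at hjd
    push Not at hjd
    exact (hs.comm hj hjd.1 hf (hfd k hs.1 ((hdiv k hs.1).2 (Or.inl rfl)))).mul_right
      (hs'.comm hj hjd.2 hf (hfd k' hs'.1 ((hdiv k' hs'.1).2 (Or.inr rfl))))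

end Pairing


open Subgroup

set_option linter.unusedSectionVars false
set_option linter.unusedVariables false

section Stage2
variable {G : Type*} [Group G] [Finite G] {α : ℕ → ℕ}

/-- elements singular for a prime outside the mask commute with it -/
lemma Mask.comm_sing {p k j : ℕ} {g e : G} (hg : Mask α p g) (he : Sing α k j e)
    (hk : ¬ k ∣ classSize g) : Commute g e := by
  refine (hg.d j he.2.1 (fun h => hk ((hg.b k j e he).2 h)) e he.2.2.1 ?_).symm
  intro r hr hrg hre
  rw [he.prime_dvd_iff hr] at hre
  subst hre
  exact hk hrg

lemma Hyp.mask_claim (hy : Hyp α G) {p q : ℕ} {u v : G} (hpq : p ≠ q) (hu : Sing α p q u)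
    (hv : Sing α q p v) {g : G} (hg : Mask α p g)
    (hmax : ∀ m : G, Mask α p m → classSize m ≤ classSize g) {y s : G} (hyp : IsPElement p y)
    (hsq : IsPElement q s) (hys : Commute y s) (hyg : Commute y g) (hsg : Commute s g) {k : ℕ}
    (hk : k.Prime) (hd : k ∣ classSize (g * (y * s))) : k ∣ classSize g ∨ k = p ∨ k = q := by
  by_contra hcon
  push Not at hcon
  obtain ⟨hkg, hkp, hkq⟩ := hcon
  have hgpos : 0 < classSize g := Nat.pos_of_ne_zero (classSize_ne_zero g)
  have hext : ∀ m : G, Mask α p m → k ∣ classSize m → Commute g m →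
      (classSize g).Coprime (classSize m) → False := by
    intro m hm hkm hc hcop
    obtain ⟨h1, h2⟩ := hg.mul hu.1 hm hc hcop
    have h3 := hmax _ h1
    rw [h2] at h3
    have h4 : 1 < classSize m := lt_of_lt_of_le hk.one_lt
      (Nat.le_of_dvd (Nat.pos_of_ne_zero (classSize_ne_zero m)) hkm)
    nlinarith
  obtain ⟨k', e, he⟩ := hy.E k hk ⟨_, hd⟩
  have hk' := he.2.1
  by_cases hkk : k = k'
  · subst hkk
    refine hext e (hy.mask_single hu.1 hkp.symm he) he.dvd (hg.comm_sing he hkg) ?_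
    rw [he.2.2.2.2]
    exact (Nat.Coprime.pow_left _ ((Nat.Prime.coprime_iff_not_dvd hk).2 hkg)).symm
  obtain ⟨e', he'⟩ := hy.partner he hkk
  have hk'g : ¬ k' ∣ classSize g := fun h => hkg ((hg.b k k' e he).2 h)
  have hk'p : k' ≠ p := by
    rintro rfl; exact hkq (hy.pairF hv he)
  have hk'q : k' ≠ q := by
    rintro rfl; exact hkp (hy.pairF hu he)
  by_cases hno : ∃ e e' : G, Sing α k k' e ∧ Sing α k' k e' ∧ Commute e e'
  · obtain ⟨e, e', he, he', hee⟩ := hno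
    obtain ⟨h1, h2⟩ := hy.mask_pair hu.1 hkp.symm hk'p.symm hkk he he' hee
    refine hext (e * e') h1 ?_ ((hg.comm_sing he hkg).mul_right (hg.comm_sing he' hk'g)) ?_
    · rw [h2]; exact he.dvd.mul_right _
    · rw [h2, he.2.2.2.2, he'.2.2.2.2]
      exact Nat.Coprime.mul_right
        (Nat.Coprime.pow_left _ ((Nat.Prime.coprime_iff_not_dvd hk).2 hkg)).symm
        (Nat.Coprime.pow_left _ ((Nat.Prime.coprime_iff_not_dvd hk').2 hk'g)).symm
  push Not at hno
  have hno1 : ∀ e e' : G, Sing α k k' e → Sing α k' k e' → ¬ Commute e e' :=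
    fun e e' h1 h2 => hno e e' h1 h2
  have hno2 : ∀ e e' : G, Sing α k' k e → Sing α k k' e' → ¬ Commute e e' :=
    fun e e' h1 h2 h3 => hno e' e h2 h1 h3.symm
  have hall : ∀ j : ℕ, j.Prime → j ≠ k → j ≠ k' → ∀ f : G, IsPElement j f →
      Commute f e ∧ Commute f e' := by
    intro j hj hjk hjk' f hf
    exact ⟨he.comm hj hjk hf (hy.nonB he he' hkk hno1 hj hjk hjk' hf),
      he'.comm hj hjk' hf (hy.nonB he' he (Ne.symm hkk) hno2 hj hjk' hjk hf)⟩
  have hy1 := hall p hu.1 hkp.symm hk'p.symm y hyp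
  have hs1 := hall q hu.2.1 hkq.symm hk'q.symm s hsq
  have hwe : Commute (g * (y * s)) e :=
    (hg.comm_sing he hkg).mul_left (hy1.1.mul_left hs1.1)
  have hwe' : Commute (g * (y * s)) e' :=
    (hg.comm_sing he' hk'g).mul_left (hy1.2.mul_left hs1.2)
  have hord : ¬ k' ∣ orderOf (g * (y * s)) := by
    intro h
    have h1 : orderOf (g * (y * s)) ∣ orderOf g * orderOf (y * s) :=
      Commute.orderOf_mul_dvd_mul_orderOf (hyg.symm.mul_right hsg.symm)
    have h2 : orderOf (y * s) ∣ orderOf y * orderOf s :=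
      Commute.orderOf_mul_dvd_mul_orderOf hys
    have h3 := h.trans (h1.trans (mul_dvd_mul_left _ h2))
    obtain ⟨m, hm⟩ := hyp
    obtain ⟨n, hn⟩ := hsq
    rw [hk'.dvd_mul, hk'.dvd_mul, hm, hn] at h3
    rcases h3 with h3 | h3 | h3
    · exact hk'g (hg.a k' hk' h3)
    · exact not_dvd_pow_ne hk' hu.1 hk'p _ h3
    · exact not_dvd_pow_ne hk' hu.2.1 hk'q _ h3
  have hcop := he.2.2.1.coprime hk' hord
  obtain ⟨c, -, hc⟩ := keyTool hk hwe.symm hcop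
    (hy.eqv hk (classSize_dvd_mul_right hwe.symm hcop) hd) he'.2.2.1 hwe'.symm
  exact hno1 _ _ he (he'.cj c) hc.symm

lemma classSize_sub {g : G} (f : Cz g) : classSize f = (Cz (f : G)).relIndex (Cz g) := by
  unfold classSize Subgroup.relIndex
  congr 1
  ext z
  rw [Subgroup.mem_subgroupOf, mem_Cz, mem_Cz]
  constructor
  · intro h; exact h.map (Cz g).subtype
  · intro h; exact Subtype.ext h

lemma Hyp.classSize_X (hy : Hyp α G) {p q : ℕ} {u v : G} (hpq : p ≠ q) (hu : Sing α p q u)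
    (hv : Sing α q p v) {g : G} (hg : Mask α p g)
    (hmax : ∀ m : G, Mask α p m → classSize m ≤ classSize g) (y s : Cz g) (hyp : IsPElement p y)
    (hsq : IsPElement q s) (hys : Commute y s) :
    classSize (y * s) = 1 ∨ classSize (y * s) = p ^ α p ∨ classSize (y * s) = q ^ α q ∨
      classSize (y * s) = p ^ α p * q ^ α q := by
  have hp := hu.1
  have hq := hu.2.1
  have hyp' := IsPElement.subtype.1 hyp
  have hsq' := IsPElement.subtype.1 hsq
  have hys' : Commute (y : G) (s : G) := hys.map (Cz g).subtype
  have hyg : Commute (y : G) g := mem_Cz.1 y.2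
  have hsg : Commute (s : G) g := mem_Cz.1 s.2
  have hqg : ¬ q ∣ classSize g := fun h => hg.c ((hg.b p q u hu).2 h)
  have hgys : Commute g ((y : G) * s) := hyg.symm.mul_right hsg.symm
  have ho : (orderOf g).Coprime (orderOf ((y : G) * s)) := by
    have h2 : orderOf ((y : G) * s) ∣ orderOf (y : G) * orderOf (s : G) :=
      Commute.orderOf_mul_dvd_mul_orderOf hys'
    refine Nat.Coprime.coprime_dvd_right h2 (Nat.Coprime.mul_right ?_ ?_)
    · exact (hyp'.coprime hp (fun h => hg.c (hg.a p hp h))).symm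
    · exact (hsq'.coprime hq (fun h => hqg (hg.a q hq h))).symm
  set w := g * ((y : G) * s) with hw
  have hcs : classSize w = classSize (y * s) * classSize g := by
    rw [hw, classSize_mul_eq hgys ho, classSize_sub (y * s)]; rfl
  have hX0 : classSize (y * s) ≠ 0 := classSize_ne_zero _
  have hfac : ∀ k, (classSize w).factorization k
      = (classSize (y * s)).factorization k + (classSize g).factorization k := by
    intro k; rw [hcs, Nat.factorization_mul hX0 (classSize_ne_zero g)]; rfl
  have hgw : classSize g ∣ classSize w := ⟨_, by rw [hcs, mul_comm]⟩
  have hother : ∀ k, k ≠ p → k ≠ q → (classSize (y * s)).factorization k = 0 := by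
    intro k hkp hkq
    by_cases hk : k.Prime
    · by_cases hkg : k ∣ classSize g
      · have h1 := hy.eqv hk hgw hkg
        have h2 := hfac k
        omega
      · have h1 : ¬ k ∣ classSize w := by
          intro hd
          rcases hy.mask_claim hpq hu hv hg hmax hyp' hsq' hys' hyg hsg hk hd with h | h | h
          exacts [hkg h, hkp h, hkq h]
        have h2 := Nat.factorization_eq_zero_of_not_dvd h1
        have h3 := hfac k
        omega
    · exact Nat.factorization_eq_zero_of_not_prime _ hk
  have hval : ∀ k, k.Prime → ¬ k ∣ classSize g →
      (classSize (y * s)).factorization k = 0 ∨ (classSize (y * s)).factorization k = α k := by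
    intro k hk hkg
    have h2 := Nat.factorization_eq_zero_of_not_dvd hkg
    have h3 := hfac k
    by_cases hd : k ∣ classSize w
    · have := hy.R k hk w hd
      right; omega
    · have := Nat.factorization_eq_zero_of_not_dvd hd
      left; omega
  have hform : ∀ a b, (classSize (y * s)).factorization p = a →
      (classSize (y * s)).factorization q = b → classSize (y * s) = p ^ a * q ^ b := by
    intro a b h1 h2
    apply Nat.eq_of_factorization_eq hX0
      (mul_ne_zero (pow_ne_zero _ hp.ne_zero) (pow_ne_zero _ hq.ne_zero))
    intro k
    by_cases hkp : k = p
    · subst hkp; rw [h1, fact_left hp hq hpq]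
    by_cases hkq : k = q
    · subst hkq; rw [h2, fact_right hp hq hpq]
    rw [hother k hkp hkq, Nat.factorization_mul (pow_ne_zero _ hp.ne_zero)
      (pow_ne_zero _ hq.ne_zero), Finsupp.add_apply, fact_pow_ne hp (Ne.symm hkp),
      fact_pow_ne hq (Ne.symm hkq)]
  rcases hval p hp hg.c with h1 | h1 <;> rcases hval q hq hqg with h2 | h2
  · left; simpa using hform _ _ h1 h2
  · right; right; left; simpa using hform _ _ h1 h2
  · right; left; simpa using hform _ _ h1 h2
  · right; right; right; exact hform _ _ h1 h2

lemma Hyp.noPair (hy : Hyp α G) {p q : ℕ} {u : G} (hpq : p ≠ q) (hu : Sing α p q u) : False := by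
  have hp := hu.1
  have hq := hu.2.1
  obtain ⟨v, hv⟩ := hy.partner hu hpq
  obtain ⟨g, hg, hmax⟩ := Set.exists_max_image {g : G | Mask α p g} classSize (Set.toFinite _)
    ⟨1, mask_one hp⟩
  have hg : Mask α p g := hg
  have hmax : ∀ m : G, Mask α p m → classSize m ≤ classSize g := fun m hm => hmax m hm
  have hqg : ¬ q ∣ classSize g := fun h => hg.c ((hg.b p q u hu).2 h)
  -- class sizes that are `{p,q}`-numbers are preserved in `Cz g`
  have hcp : ∀ a b, (classSize g).Coprime (p ^ a * q ^ b) := fun a b =>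
    Nat.Coprime.mul_right
        (Nat.Coprime.pow_left _ ((Nat.Prime.coprime_iff_not_dvd hp).2 hg.c)).symm
        (Nat.Coprime.pow_left _ ((Nat.Prime.coprime_iff_not_dvd hq).2 hqg)).symm
  have hX : ∀ f : Cz g, ∀ a b, classSize (f : G) = p ^ a * q ^ b →
      classSize f = p ^ a * q ^ b := by
    intro f a b h
    rw [classSize_sub, relIndex_of_coprime]
    · exact h
    · have h1 : (Cz (f : G)).index = p ^ a * q ^ b := h
      rw [h1]
      exact hcp a b
  have hPX : PX p q (α p) (α q) (Cz g) :=
    { hp := hp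
      hq := hq
      hpq := hpq
      ha := hu.2.2.2.1
      hb := hv.2.2.2.1
      H := fun y s h1 h2 h3 => hy.classSize_X hpq hu hv hg hmax y s h1 h2 h3
      hu := ⟨⟨u, mem_Cz.2 (hg.comm_sing hu hg.c).symm⟩, IsPElement.subtype.2 hu.2.2.1, by
        have := hX ⟨u, mem_Cz.2 (hg.comm_sing hu hg.c).symm⟩ (α p) 0 (by
          simpa using hu.2.2.2.2)
        simpa using this⟩
      hv := ⟨⟨v, mem_Cz.2 (hg.comm_sing hv hqg).symm⟩, IsPElement.subtype.2 hv.2.2.1, by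
        have := hX ⟨v, mem_Cz.2 (hg.comm_sing hv hqg).symm⟩ 0 (α q) (by
          simpa using hv.2.2.2.2)
        simpa using this⟩ }
  have hfin : ∀ y s : G, IsPElement p y → IsPElement q s → Commute y s → Commute y g →
      Commute s g → classSize (y * s) = p ^ α p * q ^ α q → False := by
    intro y s h1 h2 h3 h4 h5 h6
    refine hPX.final (y := ⟨y, mem_Cz.2 h4⟩) (s := ⟨s, mem_Cz.2 h5⟩) (IsPElement.subtype.2 h1)
      (IsPElement.subtype.2 h2) (Subtype.ext h3) (hX _ _ _ h6)
  by_cases hcom : ∃ u v : G, Sing α p q u ∧ Sing α q p v ∧ Commute u v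
  · obtain ⟨u, v, hu, hv, huv⟩ := hcom
    refine hfin v u hv.2.2.1 hu.2.2.1 huv.symm (hg.comm_sing hv hqg).symm
      (hg.comm_sing hu hg.c).symm ?_
    rw [huv.symm.eq, classSize_mul_coprime huv (hu.2.2.1.coprime' hq hp hpq.symm hv.2.2.1), hu.2.2.2.2,
      hv.2.2.2.2]
    rw [hu.2.2.2.2, hv.2.2.2.2]
    exact Nat.Coprime.pow _ _ ((Nat.coprime_primes hp hq).2 hpq)
  push Not at hcom
  have hno1 : ∀ e e' : G, Sing α p q e → Sing α q p e' → ¬ Commute e e' :=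
    fun e e' h1 h2 => hcom e e' h1 h2
  have hno2 : ∀ e e' : G, Sing α q p e → Sing α p q e' → ¬ Commute e e' :=
    fun e e' h1 h2 h3 => hcom e' e h2 h1 h3.symm
  obtain ⟨h, hh⟩ := hy.H2 p q hp hq hpq ⟨u, hu.dvd⟩ ⟨v, hv.dvd⟩
  obtain ⟨y, h', hyz, hhz, heq, hyh, hyp, hop⟩ := split p hp h
  obtain ⟨s, z, hsz, hzz, heq', hsz', hsq, hoq⟩ := split q hq h'
  have hh'le : zpowers h' ≤ zpowers h := zpowers_le.2 hhz
  have hprimes : ∀ f ∈ zpowers h, ∀ k : ℕ, k.Prime → k ∣ classSize f → k = p ∨ k = q := by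
    intro f hf k hk hd
    have h1 := hd.trans (classSize_dvd_of_mem_zpowers hf)
    rw [hh, hk.dvd_mul] at h1
    rcases h1 with h1 | h1
    · left; exact (Nat.prime_dvd_prime_iff_eq hk hp).1 (hk.dvd_of_dvd_pow h1)
    · right; exact (Nat.prime_dvd_prime_iff_eq hk hq).1 (hk.dvd_of_dvd_pow h1)
  have hzc : zpowers z ≤ Subgroup.center G := by
    apply le_of_forall_prime
    intro j hj f hf hfj
    have hfo : orderOf f ∣ orderOf z := orderOf_dvd_of_mem_zpowers hf
    have hzo : orderOf z ∣ orderOf h' := orderOf_dvd_of_mem_zpowers hzz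
    have hone : ∀ r : ℕ, r.Prime → IsPElement r f → (orderOf f).Coprime r → f = 1 := by
      intro r hr ⟨m, hm⟩ hc
      rw [hm] at hc
      rw [← orderOf_eq_one_iff, hm]
      rcases Nat.eq_zero_or_pos m with h0 | h0
      · rw [h0, pow_zero]
      · exact absurd hc (Nat.not_coprime_of_dvd_of_dvd hr.one_lt (dvd_pow_self r h0.ne') dvd_rfl)
    by_cases hjp : j = p
    · subst hjp
      rw [hone j hj hfj (Nat.Coprime.coprime_dvd_left (hfo.trans hzo) hop)]
      exact one_mem _
    by_cases hjq : j = q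
    · subst hjq
      rw [hone j hj hfj (Nat.Coprime.coprime_dvd_left hfo hoq)]
      exact one_mem _
    have h1 := hy.nonB hu hv hpq hno1 hj hjp hjq hfj
    have h2 := hy.nonB hv hu hpq.symm hno2 hj hjq hjp hfj
    have h3 : classSize f = 1 := by
      by_contra hne
      obtain ⟨k, hk, hkd⟩ := Nat.exists_prime_and_dvd hne
      rcases hprimes f (hh'le ((zpowers_le.2 hzz) hf)) k hk hkd with rfl | rfl
      exacts [h1 hkd, h2 hkd]
    rw [Subgroup.mem_center_iff]
    intro x
    exact classSize_one_iff.1 h3 x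
  have hz1 : classSize z = 1 := by
    rw [classSize_one_iff]
    intro x
    exact Subgroup.mem_center_iff.1 (hzc (mem_zpowers z)) x
  have hys : Commute y s := (hyh.symm.of_mem_zpowers hsz).symm
  have hg1 : ∀ f ∈ zpowers h, ∀ k : ℕ, k.Prime → k ∣ classSize g → ¬ k ∣ classSize f := by
    intro f hf k hk hkg hkf
    rcases hprimes f hf k hk hkf with rfl | rfl
    exacts [hg.c hkg, hqg hkg]
  refine hfin y s hyp hsq hys (hg.d p hp hg.c y hyp (hg1 y hyz))
    (hg.d q hq hqg s hsq (hg1 s (hh'le hsz))) ?_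
  rw [← hh, heq, heq', ← mul_assoc]
  have hzc' := classSize_one_iff.1 hz1 (y * s)
  rw [hzc'.eq, classSize_mul_central hz1]

end Stage2


open Subgroup

set_option linter.unusedSectionVars false
set_option linter.unusedVariables false

section Stage3
variable {G : Type*} [Group G] [Finite G] {α : ℕ → ℕ}

lemma Hyp.local_comm (hy : Hyp α G) {k : ℕ} {u : G} (hu : Sing α k k u) {x y : G}
    (hx : Commute x u) (hyu : Commute y u) (hxk : IsPElement k x) (hyo : (orderOf y).Coprime k) :
    Commute x y := by
  have hk := hu.1
  have h : ∀ g : Cz u, (orderOf g).Coprime k → ¬ k ∣ classSize g := by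
    intro g hg hd
    have hgu : Commute (g : G) u := mem_Cz.1 g.2
    have ho : (orderOf u).Coprime (orderOf (g : G)) := by
      obtain ⟨m, hm⟩ := hu.2.2.1
      rw [hm, Subgroup.orderOf_coe]
      exact (Nat.Coprime.pow_right m hg).symm
    have h1 := classSize_mul_eq hgu.symm ho
    rw [← classSize_sub] at h1
    have h2 := hy.eqv hk (Dvd.intro_left _ h1.symm) hu.dvd
    rw [h1, Nat.factorization_mul (classSize_ne_zero g) (classSize_ne_zero u)] at h2
    have h3 := hk.factorization_pos_of_dvd (classSize_ne_zero g) hd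
    simp only [Finsupp.add_apply] at h2
    omega
  have := J1 (G := Cz u) hk h (x := ⟨x, mem_Cz.2 hx⟩) (y := ⟨y, mem_Cz.2 hyu⟩)
    (IsPElement.subtype.2 hxk) (by rw [← Subgroup.orderOf_coe]; exact hyo)
  exact congrArg Subtype.val this

lemma Hyp.st3_core (hy : Hyp α G) {k : ℕ} {u : G} (hu : Sing α k k u) (O : Subgroup G) [O.Normal]
    (hO : IsPGroup k O) (huO : u ∈ O) {x : G} (hxu : Commute x u) (hxo : (orderOf x).Coprime k) :
    O ≤ Cz x := by
  have hk := hu.1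
  haveI : Fact k.Prime := ⟨hk⟩
  by_contra hne
  have hlt : (Cz x).subgroupOf O < ⊤ := by
    rw [lt_top_iff_ne_top]
    intro h
    exact hne (Subgroup.subgroupOf_eq_top.1 h)
  haveI : Group.IsNilpotent O := hO.isNilpotent
  have hnc : NormalizerCondition O := Group.normalizerCondition_of_isNilpotent
  obtain ⟨v, hvN, hvB⟩ := SetLike.exists_of_lt (hnc _ hlt)
  have h1 := (Subgroup.mem_normalizer_iff.1 hvN ⟨u, huO⟩).1
    (Subgroup.mem_subgroupOf.2 (mem_Cz.2 hxu.symm))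
  have h2 : Commute (cj (v : G) u) x := mem_Cz.1 (Subgroup.mem_subgroupOf.1 h1)
  have h3 : Commute (cj (v : G)⁻¹ x) u := by
    have := (@cj_commute_iff _ _ (v : G)⁻¹ _ _).2 h2
    rw [cj_inv_cj] at this
    exact this.symm
  have hcO : x⁻¹ * cj (v : G)⁻¹ x ∈ O := by
    have h4 : x⁻¹ * (v : G)⁻¹ * x ∈ O := by
      have := Subgroup.Normal.conj_mem ‹O.Normal› _ (O.inv_mem v.2) x⁻¹
      simpa using this
    have := O.mul_mem h4 v.2
    simpa [cj, mul_assoc] using this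
  have hcu : Commute (x⁻¹ * cj (v : G)⁻¹ x) u := (hxu.inv_left).mul_left h3
  have hck := isPElement_of_mem_isPGroup hk hO hcO
  have hcx := hy.local_comm hu hcu hxu hck hxo
  set c := x⁻¹ * cj (v : G)⁻¹ x with hc
  have hx' : cj (v : G)⁻¹ x = x * c := by rw [hc]; group
  have hcn : c ^ orderOf x = 1 := by
    have h5 : (cj (v : G)⁻¹ x) ^ orderOf x = 1 := by
      rw [← orderOf_cj (v : G)⁻¹ x, pow_orderOf_eq_one]
    rw [hx', hcx.symm.mul_pow, pow_orderOf_eq_one, one_mul] at h5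
    exact h5
  have hc1 : c = 1 := by
    rw [← orderOf_eq_one_iff]
    obtain ⟨m, hm⟩ := hck
    have h6 := orderOf_dvd_of_pow_eq_one hcn
    have h7 : (orderOf x).Coprime (orderOf c) := by rw [hm]; exact Nat.Coprime.pow_right m hxo
    exact Nat.Coprime.eq_one_of_dvd h7.symm h6
  rw [hc1, mul_one, cj_fix_iff] at hx'
  apply hvB
  rw [Subgroup.mem_subgroupOf]
  exact mem_Cz.2 (by simpa using hx'.inv_left)

lemma Hyp.st3 (hy : Hyp α G) {k : ℕ} (hk : k.Prime) (hx : ∃ x : G, k ∣ classSize x) :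
    ∃ Y : Subgroup G, Y.Normal ∧ (∀ r : ℕ, r.Prime → r ≠ k → ∀ x : G, IsPElement r x → x ∈ Y) ∧
      ∀ f ∈ Y, IsPElement k f → (∀ S : Sylow k G, f ∈ (S : Subgroup G)) ∧
        ∀ r : ℕ, r.Prime → r ≠ k → ∀ x : G, IsPElement r x → Commute f x := by
  haveI : Fact k.Prime := ⟨hk⟩
  obtain ⟨j, u, hu⟩ := hy.E k hk hx
  have hkj : k = j := by
    by_contra hne
    exact hy.noPair hne hu
  subst hkj
  obtain ⟨S⟩ := (inferInstance : Nonempty (Sylow k G))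
  set O := (S : Subgroup G).normalCore with hOdef
  have hOk : IsPGroup k O := S.isPGroup'.to_le (Subgroup.normalCore_le _)
  have huO : u ∈ O := fun c => wielandt hk hu.2.2.1 hu.2.2.2.2 S c
  have hYn : (Subgroup.centralizer (O : Set G)).Normal := inferInstance
  have hYu : ∀ f ∈ Subgroup.centralizer (O : Set G), Commute f u := by
    intro f hf
    exact (Subgroup.mem_centralizer_iff.1 hf u huO).symm
  have hr : ∀ r : ℕ, r.Prime → r ≠ k → ∀ x : G, IsPElement r x →
      x ∈ Subgroup.centralizer (O : Set G) := by
    intro r hr hrk x hx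
    have hnd : ¬ r ∣ classSize u := fun h => hrk ((hu.prime_dvd_iff hr).1 h)
    obtain ⟨c, hc⟩ := F1 hr hnd hx
    have h1 := hy.st3_core hu O hOk huO hc
      ((hx.cj c).coprime hr (fun h => hrk ((Nat.prime_dvd_prime_iff_eq hr hk).1 h)))
    have h2 : cj c x ∈ Subgroup.centralizer (O : Set G) := by
      rw [Subgroup.mem_centralizer_iff]
      intro o ho
      exact mem_Cz.1 (h1 ho)
    have h3 := hYn.conj_mem _ h2 c⁻¹
    have h4 := cj_inv_cj c x
    unfold cj at h3 h4
    rw [h4] at h3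
    exact h3
  refine ⟨_, hYn, hr, ?_⟩
  intro f hf hfk
  have hcom : ∀ r : ℕ, r.Prime → r ≠ k → ∀ x : G, IsPElement r x → Commute f x := by
    intro r hr' hrk x hx
    exact hy.local_comm hu (hYu f hf) (hYu x (hr r hr' hrk x hx)) hfk
      (hx.coprime hr' (fun h => hrk ((Nat.prime_dvd_prime_iff_eq hr' hk).1 h)))
  refine ⟨fun T => ?_, hcom⟩
  have hpow : ∀ {d : ℕ}, d.Prime → d ∣ classSize f → d = k := by
    intro d hd hdf
    by_contra hdk
    have h1 := factorization_le_of_forall hd (D := Cz f) (H := (⊤ : Subgroup G))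
      (fun x _ hx => mem_Cz.2 (hcom d hd hdk x hx).symm)
    have h2 := classSize_factorization_add d f
    have h3 := hd.factorization_pos_of_dvd (classSize_ne_zero f) hdf
    rw [Subgroup.card_top] at h1
    omega
  have h1 := Nat.eq_prime_pow_of_unique_prime_dvd (classSize_ne_zero f) hpow
  have h2 := wielandt hk hfk h1 T 1
  rwa [cj_one] at h2

lemma Hyp.sylow_normal (hy : Hyp α G) {k : ℕ} (hk : k.Prime) (S : Sylow k G) :
    (S : Subgroup G).Normal := by
  haveI : Fact k.Prime := ⟨hk⟩
  have hSk : ∀ s ∈ (S : Subgroup G), IsPElement k s :=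
    fun s hs => isPElement_of_mem_isPGroup hk S.isPGroup' hs
  let N : Subgroup G := Subgroup.normalizer ((S : Subgroup G) : Set G)
  have hSN : (S : Subgroup G) ≤ N := Subgroup.le_normalizer
  have hNS : ∀ g ∈ N, IsPElement k g → g ∈ (S : Subgroup G) := by
    intro g hg hgk
    have h := (hgk.isPGroup_zpowers hk).inf_normalizer_sylow S
    have h2 : g ∈ zpowers g ⊓ N := ⟨mem_zpowers g, hg⟩
    have h3 : g ∈ zpowers g ⊓ (S : Subgroup G) := by rw [← h]; exact h2
    exact h3.2
  have hcN : ∀ g : G, (∀ s ∈ (S : Subgroup G), Commute g s) → g ∈ N := by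
    intro g hg
    apply Subgroup.mem_normalizer_iff.2
    have key : ∀ g : G, (∀ s ∈ (S : Subgroup G), Commute g s) → ∀ s ∈ (S : Subgroup G),
        g * s * g⁻¹ ∈ (S : Subgroup G) := by
      intro g hg s hs
      have : g * s * g⁻¹ = s := by rw [(hg s hs).eq]; group
      rwa [this]
    intro s
    refine ⟨key g hg s, fun h => ?_⟩
    have h2 := key g⁻¹ (fun s hs => (hg s hs).inv_left) _ h
    have : g⁻¹ * (g * s * g⁻¹) * g⁻¹⁻¹ = s := by group
    rwa [this] at h2
  have hY : ∀ j : ℕ, ∃ Y : Subgroup G, j.Prime → (∃ x : G, j ∣ classSize x) → Y.Normal ∧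
      (∀ r : ℕ, r.Prime → r ≠ j → ∀ x : G, IsPElement r x → x ∈ Y) ∧
      ∀ f ∈ Y, IsPElement j f → (∀ S : Sylow j G, f ∈ (S : Subgroup G)) ∧
        ∀ r : ℕ, r.Prime → r ≠ j → ∀ x : G, IsPElement r x → Commute f x := by
    intro j
    by_cases h : j.Prime ∧ ∃ x : G, j ∣ classSize x
    · obtain ⟨Y, h3⟩ := hy.st3 h.1 h.2
      exact ⟨Y, fun _ _ => h3⟩
    · exact ⟨⊤, fun h1 h2 => absurd ⟨h1, h2⟩ h⟩
  choose Y hY using hY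
  let Yb : Subgroup G := ⨅ j : ℕ, ⨅ _ : j.Prime ∧ ∃ x : G, j ∣ classSize x, Y j
  have hYb : ∀ g : G, g ∈ Yb ↔ ∀ j : ℕ, (j.Prime ∧ ∃ x : G, j ∣ classSize x) → g ∈ Y j := by
    intro g
    simp only [Yb, Subgroup.mem_iInf]
  have hYN : Yb ≤ N := by
    apply le_of_forall_prime
    intro j hj f hf hfj
    by_cases hjx : ∃ x : G, j ∣ classSize x
    · obtain ⟨hn, h1, h2⟩ := hY j hj hjx
      obtain ⟨h3, h4⟩ := h2 f ((hYb f).1 hf j ⟨hj, hjx⟩) hfj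
      by_cases hjk : j = k
      · subst hjk
        exact hSN (h3 S)
      · exact hcN f (fun s hs => h4 k hk (Ne.symm hjk) s (hSk s hs))
    · push Not at hjx
      exact hcN f (fun s _ => (J2 hj hjx hfj s).symm)
  have hconj : ∀ r : ℕ, r.Prime → r ≠ k → ∀ x : G, IsPElement r x → ∀ s ∈ (S : Subgroup G),
      x * s * x⁻¹ ∈ (S : Subgroup G) := by
    intro r hr hrk x hx s hs
    have hc : x * s * x⁻¹ * s⁻¹ ∈ Yb := by
      rw [hYb]
      rintro j ⟨hj, hjx⟩
      obtain ⟨hn, h1, -⟩ := hY j hj hjx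
      by_cases hjk : j = k
      · have hxY := h1 r hr (by rw [hjk]; exact hrk) x hx
        have h5 := (Y j).mul_mem hxY (hn.conj_mem _ ((Y j).inv_mem hxY) s)
        simpa [mul_assoc] using h5
      · have hsY := h1 k hk (Ne.symm hjk) s (hSk s hs)
        exact (Y j).mul_mem (hn.conj_mem _ hsY x) ((Y j).inv_mem hsY)
    have h6 : x * s * x⁻¹ ∈ N := by
      have := N.mul_mem (hYN hc) (hSN hs)
      simpa using this
    exact hNS _ h6 ((hSk s hs).cj x)
  have hrN : ∀ r : ℕ, r.Prime → r ≠ k → ∀ x : G, IsPElement r x → x ∈ N := by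
    intro r hr hrk x hx
    apply Subgroup.mem_normalizer_iff.2
    intro s
    refine ⟨hconj r hr hrk x hx s, fun h => ?_⟩
    have h2 := hconj r hr hrk x⁻¹ hx.inv _ h
    have : x⁻¹ * (x * s * x⁻¹) * x⁻¹⁻¹ = s := by group
    rwa [this] at h2
  have hidx : N.index = 1 := by
    by_contra hne
    obtain ⟨r, hr, hrd⟩ := Nat.exists_prime_and_dvd hne
    by_cases hrk : r = k
    · subst hrk
      exact S.not_dvd_index (hrd.trans (Subgroup.index_dvd_of_le hSN))
    · have h1 := factorization_le_of_forall hr (D := N) (H := (⊤ : Subgroup G))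
        (fun x _ hx => hrN r hr hrk x hx)
      have h2 := factorization_index_add r N
      have h3 := hr.factorization_pos_of_dvd Subgroup.index_ne_zero_of_finite hrd
      rw [Subgroup.card_top] at h1
      omega
  have hN : N = ⊤ := Subgroup.index_eq_one.1 hidx
  exact Subgroup.normalizer_eq_top_iff.1 hN

end Stage3

section Main
variable {G : Type*} [Group G] [Finite G]

lemma Hyp.of (α : ℕ → ℕ)
    (hα : ∀ p : ℕ, p.Prime → (∃ x : G, p ∣ classSize x) →
      1 ≤ α p ∧ {a : ℕ | ∃ x : G, pIndex p x = a} = {1, p ^ α p})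
    (hN : {k : ℕ | ∃ x : G, classSize x = k} =
      {k : ℕ | ∃ S : Finset ℕ,
        (∀ p ∈ S, p.Prime ∧ ∃ x : G, p ∣ classSize x) ∧ k = ∏ p ∈ S, p ^ α p}) :
    Hyp α G := by
  have hR : ∀ p : ℕ, p.Prime → ∀ x : G, p ∣ classSize x → (classSize x).factorization p = α p := by
    intro p hp x hx
    have h1 := (hα p hp ⟨x, hx⟩).2
    have h2 : pIndex p x ∈ ({1, p ^ α p} : Set ℕ) := by rw [← h1]; exact ⟨x, rfl⟩
    have h3 := hp.factorization_pos_of_dvd (classSize_ne_zero x) hx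
    rcases h2 with h2 | h2
    · unfold pIndex at h2
      rcases Nat.pow_eq_one.1 h2 with h4 | h4
      · exact absurd h4 hp.one_lt.ne'
      · omega
    · exact Nat.pow_right_injective hp.two_le h2
  have hS : ∀ S : Finset ℕ, (∀ p ∈ S, p.Prime ∧ ∃ x : G, p ∣ classSize x) →
      ∃ x : G, classSize x = ∏ p ∈ S, p ^ α p := by
    intro S hS
    have : (∏ p ∈ S, p ^ α p) ∈ {k : ℕ | ∃ x : G, classSize x = k} := by
      rw [hN]; exact ⟨S, hS, rfl⟩
    exact this
  refine ⟨hR, ?_, ?_⟩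
  · intro p hp hpx
    have ha := (hα p hp hpx).1
    obtain ⟨x, hx⟩ := hS {p} (by simpa using ⟨hp, hpx⟩)
    rw [Finset.prod_singleton] at hx
    have hnc : ¬ zpowers x ≤ Subgroup.center G := by
      intro h
      have h1 : classSize x = 1 := by
        rw [classSize_one_iff]
        exact fun y => Subgroup.mem_center_iff.1 (h (mem_zpowers x)) y
      rw [hx] at h1
      rcases Nat.pow_eq_one.1 h1 with h4 | h4
      · exact absurd h4 hp.one_lt.ne'
      · omega
    have h2 : ∃ j : ℕ, j.Prime ∧ ∃ f ∈ zpowers x, IsPElement j f ∧ f ∉ Subgroup.center G := by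
      by_contra hcon
      push Not at hcon
      exact hnc (le_of_forall_prime fun j hj f hf hfj => hcon j hj f hf hfj)
    obtain ⟨j, hj, f, hf, hfj, hfc⟩ := h2
    have h3 := classSize_dvd_of_mem_zpowers hf
    rw [hx] at h3
    obtain ⟨m, hm, hfm⟩ := (Nat.dvd_prime_pow hp).1 h3
    have hm0 : m ≠ 0 := by
      rintro rfl
      rw [pow_zero, classSize_one_iff] at hfm
      exact hfc (Subgroup.mem_center_iff.2 hfm)
    have h4 := hR p hp f (by rw [hfm]; exact dvd_pow_self p hm0)
    rw [hfm, fact_pow_self hp] at h4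
    exact ⟨j, f, hp, hj, hfj, ha, by rw [hfm, h4]⟩
  · intro p q hp hq hpq hpx hqx
    obtain ⟨x, hx⟩ := hS {p, q} (by
      intro r hr
      rcases Finset.mem_insert.1 hr with h | h
      · rw [h]; exact ⟨hp, hpx⟩
      · rw [Finset.mem_singleton.1 h]; exact ⟨hq, hqx⟩)
    rw [Finset.prod_pair hpq] at hx
    exact ⟨x, hx⟩

lemma Hyp.nilpotent {α : ℕ → ℕ} (hy : Hyp α G) : Group.IsNilpotent G := by
  refine ((Group.isNilpotent_of_finite_tfae (G := G)).out 0 3).2 ?_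
  intro p hp P
  exact hy.sylow_normal hp.out P

end Main


end Helpers

/-- Casolo–Tombari: if for every prime `p` dividing some conjugacy class size of `G` one has
`N(G)_p = {1, p ^ α p}` with `α p ≥ 1`, and `N(G)` is exactly the set of all products
`∏ p ∈ S, p ^ α p` over finite sets `S` of such primes, then `G` is nilpotent. -/
theorem casolo_tombari_nilpotent {G : Type*} [Group G] [Finite G] (α : ℕ → ℕ)
    (hα : ∀ p : ℕ, p.Prime → (∃ x : G, p ∣ classSize x) →
      1 ≤ α p ∧ {a : ℕ | ∃ x : G, pIndex p x = a} = {1, p ^ α p})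
    (hN : {k : ℕ | ∃ x : G, classSize x = k} =
      {k : ℕ | ∃ S : Finset ℕ,
        (∀ p ∈ S, p.Prime ∧ ∃ x : G, p ∣ classSize x) ∧ k = ∏ p ∈ S, p ^ α p}) :
    Group.IsNilpotent G := by
  exact (Hyp.of α hα hN).nilpotent
end

section
/- (Ito, 1970) Let G be a finite group whose set of conjugacy class sizes is N(G) = {1, m, n}, where m and n are coprime integers greater than 1. Then G is solvable. -/
set_option linter.unusedSectionVars false

open scoped Pointwise

namespace ItoAux

variable {G : Type*} [Group G] [Finite G]

/-- If a prime divides the index of a subgroup, some element of prime power order lies outside. -/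
theorem exists_primary {K : Subgroup G} {q : ℕ} (hq : q.Prime) (h : q ∣ K.index) :
    ∃ x : G, x ∉ K ∧ ∃ k : ℕ, orderOf x = q ^ k := by
  have : Fact q.Prime := ⟨hq⟩
  obtain ⟨Q⟩ : Nonempty (Sylow q G) := inferInstance
  have hQ : ¬ (Q : Subgroup G) ≤ K := by
    intro hle
    have h1 := Q.not_dvd_index
    exact h1 (h.trans (Subgroup.index_dvd_of_le hle))
  obtain ⟨x, hx, hxK⟩ := SetLike.not_le_iff_exists.1 hQ
  refine ⟨x, hxK, ?_⟩
  obtain ⟨k, hk⟩ := IsPGroup.iff_orderOf.1 Q.2 ⟨x, hx⟩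
  exact ⟨k, by simpa using hk⟩

theorem exists_primary_sub {D K : Subgroup G} (h : ¬ D ≤ K) :
    ∃ q : ℕ, q.Prime ∧ ∃ x ∈ D, x ∉ K ∧ ∃ k : ℕ, orderOf x = q ^ k := by
  have h1 : (K.subgroupOf D).index ≠ 1 := by
    rwa [Ne, Subgroup.index_eq_one, Subgroup.subgroupOf_eq_top]
  obtain ⟨q, hq, hd⟩ := Nat.exists_prime_and_dvd h1
  obtain ⟨x, hx, k, hk⟩ := exists_primary hq hd
  refine ⟨q, hq, x, x.2, fun hh => hx (Subgroup.mem_subgroupOf.2 hh), k, ?_⟩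
  simpa using hk

theorem quot_pgroup (N : Subgroup G) [N.Normal] (p : ℕ)
    (h : ∀ r : ℕ, r.Prime → r ≠ p → ∀ x : G, (∃ k : ℕ, orderOf x = r ^ k) → x ∈ N) :
    IsPGroup p (G ⧸ N) := by
  have h0 : N.index ≠ 0 := Subgroup.index_ne_zero_of_finite
  have := Nat.eq_prime_pow_of_unique_prime_dvd (n := N.index) (p := p) h0 (by
    intro d hd hdd
    by_contra hne
    obtain ⟨x, hx, hk⟩ := exists_primary hd hdd
    exact hx (h d hd hne x hk))
  exact IsPGroup.of_card this

theorem exists_conj_mem {D : Subgroup G} {q : ℕ} (hq : q.Prime) (h : ¬ q ∣ D.index) {z : G}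
    (hz : ∃ k : ℕ, orderOf z = q ^ k) : ∃ g : G, g * z * g⁻¹ ∈ D := by
  have : Fact q.Prime := ⟨hq⟩
  obtain ⟨k, hk⟩ := hz
  have hp : IsPGroup q (Subgroup.zpowers z) := IsPGroup.of_card (n := k) (by simpa using hk)
  obtain ⟨c, hc⟩ := hp.nonempty_fixed_point_of_prime_not_dvd_card (G ⧸ D) h
  obtain ⟨g, rfl⟩ := QuotientGroup.mk_surjective c
  have := hc ⟨z, Subgroup.mem_zpowers z⟩
  have h2 : ((z * g : G) : G ⧸ D) = g := this
  rw [eq_comm, QuotientGroup.eq] at h2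
  exact ⟨g⁻¹, by simpa [mul_assoc] using h2⟩

theorem mem_zpowers_mul {x y : G} (hc : Commute x y)
    (ho : (orderOf x).Coprime (orderOf y)) : x ∈ Subgroup.zpowers (x * y) := by
  have h1 : (x * y) ^ orderOf y = x ^ orderOf y := by
    rw [hc.mul_pow, pow_orderOf_eq_one, mul_one]
  have h2 : x ∈ Subgroup.zpowers (x ^ orderOf y) := by
    rw [mem_zpowers_pow_iff]
    exact ho.symm
  rw [← h1] at h2
  exact Subgroup.zpowers_le.2 (Subgroup.npow_mem_zpowers _ _) h2

theorem cent_le_of_mem {x y : G} (h : x ∈ Subgroup.zpowers y) :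
    Subgroup.centralizer {y} ≤ Subgroup.centralizer {x} := by
  obtain ⟨k, rfl⟩ := h
  intro g hg
  rw [Subgroup.mem_centralizer_singleton_iff] at hg ⊢
  exact (Commute.zpow_right (show Commute g y from hg) k)

theorem cent_mul_le {x y : G} (hc : Commute x y)
    (ho : (orderOf x).Coprime (orderOf y)) :
    Subgroup.centralizer {x * y} ≤ Subgroup.centralizer {x} ∧
    Subgroup.centralizer {x * y} ≤ Subgroup.centralizer {y} := by
  refine ⟨cent_le_of_mem (mem_zpowers_mul hc ho), cent_le_of_mem ?_⟩
  rw [hc.eq]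
  exact mem_zpowers_mul hc.symm ho.symm

theorem mem_cent {x y : G} : x ∈ Subgroup.centralizer {y} ↔ Commute x y := 
  Subgroup.mem_centralizer_singleton_iff

/-- the class of `b` -/
theorem ncard_class (b : G) : {y | ∃ g : G, y = g * b * g⁻¹}.ncard = classSize b := by
  have h := MulAction.index_stabilizer (ConjAct G) b
  rw [ConjAct.stabilizer_eq_centralizer] at h
  have h2 : MulAction.orbit (ConjAct G) b = {y | ∃ g : G, y = g * b * g⁻¹} := by
    ext y
    constructor
    · rintro ⟨g, rfl⟩
      exact ⟨ConjAct.ofConjAct g, ConjAct.smul_def _ _⟩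
    · rintro ⟨g, rfl⟩
      exact ⟨ConjAct.toConjAct g, ConjAct.smul_def _ _⟩
  rw [← h2, ← h]
  rfl

theorem classSize_conj (x g : G) : classSize (g * x * g⁻¹) = classSize x := by
  rw [← ncard_class, ← ncard_class]
  congr 1
  ext y
  constructor
  · rintro ⟨k, rfl⟩
    exact ⟨k * g, by group⟩
  · rintro ⟨k, rfl⟩
    exact ⟨k * g⁻¹, by group⟩

theorem orderOf_conj (x g : G) : orderOf (g * x * g⁻¹) = orderOf x := by
  have := orderOf_injective (MulAut.conj g).toMonoidHom (MulAut.conj g).injective x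
  simpa using this

theorem classSize_eq_one {x : G} : classSize x = 1 ↔ x ∈ Subgroup.center G := by
  unfold classSize
  rw [Subgroup.index_eq_one, Subgroup.centralizer_eq_top_iff_subset]
  simp

/-- factorization from coprime indices -/
theorem factor {A B : Subgroup G} (h : A.index.Coprime B.index) (g : G) :
    ∃ u ∈ B, ∃ v ∈ A, g = u * v := by
  have h1 : A.index ∣ A.relIndex B := by
    have e1 : A.relIndex B * B.index = (A ⊓ B).index := by
      rw [← Subgroup.relIndex_mul_index (inf_le_right : A ⊓ B ≤ B), Subgroup.inf_relIndex_right]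
    have e2 : A.index ∣ (A ⊓ B).index := Subgroup.index_dvd_of_le inf_le_left
    rw [← e1] at e2
    exact h.dvd_of_dvd_mul_right e2
  have hst : MulAction.stabilizer B ((1 : G) : G ⧸ A) = A.subgroupOf B := by
    ext b
    rw [MulAction.mem_stabilizer_iff, Subgroup.mem_subgroupOf]
    have : b • ((1 : G) : G ⧸ A) = (((b : G) * 1 : G) : G ⧸ A) := rfl
    rw [this, eq_comm, QuotientGroup.eq]
    simp
  have hi := MulAction.index_stabilizer B ((1 : G) : G ⧸ A)
  rw [hst] at hi
  have hle : A.index ≤ (MulAction.orbit B ((1 : G) : G ⧸ A)).ncard := by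
    rw [← hi]
    exact Nat.le_of_dvd (Nat.pos_of_ne_zero Subgroup.index_ne_zero_of_finite) h1
  have huniv : MulAction.orbit B ((1 : G) : G ⧸ A) = Set.univ := by
    apply Set.eq_of_subset_of_ncard_le (Set.subset_univ _)
    rw [Set.ncard_univ]
    exact hle
  have hg : ((g : G) : G ⧸ A) ∈ MulAction.orbit B ((1 : G) : G ⧸ A) := by
    rw [huniv]; trivial
  obtain ⟨b, hb⟩ := hg
  have hb' : (((b : G) * 1 : G) : G ⧸ A) = g := hb
  rw [QuotientGroup.eq] at hb'
  exact ⟨b, b.2, _, hb', by simp⟩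

/-- If `a`, `b` have coprime class sizes, products of conjugates are conjugate to `a * b`. -/
theorem prod_class {a b : G} (h : (classSize a).Coprime (classSize b)) (g k : G) :
    ∃ w : G, g * a * g⁻¹ * (k * b * k⁻¹) = w * (a * b) * w⁻¹ := by
  obtain ⟨u, hu, v, hv, e⟩ := factor h (k⁻¹ * g)
  rw [mem_cent] at hu hv
  refine ⟨k * u, ?_⟩
  have hg : g = k * u * v := by rw [mul_assoc, ← e]; group
  have e1 : v * a * v⁻¹ = a := by rw [hv.eq]; group
  have e2 : u * b * u⁻¹ = b := by rw [hu.eq]; group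
  calc g * a * g⁻¹ * (k * b * k⁻¹) = k * u * (v * a * v⁻¹) * u⁻¹ * b * k⁻¹ := by
        rw [hg]; group
    _ = k * u * a * u⁻¹ * (u * b * u⁻¹) * k⁻¹ := by rw [e1, e2]
    _ = _ := by group

/-- the normal subgroup `S` -/
theorem exists_S (m n : ℕ) (hlt : m < n) (hm : 1 < m) (hmn : m.Coprime n)
    (hN : ∀ x : G, classSize x = 1 ∨ classSize x = m ∨ classSize x = n)
    (hb : ∃ b : G, classSize b = n) :
    ∃ S : Subgroup G, S.Normal ∧ (∀ p : ℕ, p.Prime → p ∣ Nat.card S → p ∣ n) ∧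
      ∀ a : G, classSize a = m → ∀ g : G, a⁻¹ * (g * a * g⁻¹) ∈ S := by
  obtain ⟨b, hb⟩ := hb
  set B : Set G := {y | ∃ g : G, y = g * b * g⁻¹} with hB
  have hcB : B.ncard = n := by rw [hB, ncard_class, hb]
  have hconj : ∀ (g y : G), y ∈ B → g * y * g⁻¹ ∈ B := by
    rintro g _ ⟨k, rfl⟩
    exact ⟨g * k, by group⟩
  have hmemS : ∀ s : G, s ∈ MulAction.stabilizer G B ↔ ∀ y ∈ B, s * y ∈ B := by
    intro s
    rw [MulAction.mem_stabilizer_set_iff_smul_set_subset B.toFinite]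
    constructor
    · intro h y hy
      exact h ⟨y, hy, rfl⟩
    · rintro h _ ⟨y, hy, rfl⟩
      exact h y hy
  refine ⟨MulAction.stabilizer G B, ⟨?_⟩, ?_, ?_⟩
  · intro s hs g
    rw [hmemS] at hs ⊢
    intro y hy
    have h1 := hconj g _ (hs _ (hconj g⁻¹ y hy))
    have h2 : g * s * g⁻¹ * y = g * (s * (g⁻¹ * y * g⁻¹⁻¹)) * g⁻¹ := by group
    rwa [h2]
  · intro p hp hd
    have : Fact p.Prime := ⟨hp⟩
    obtain ⟨s, hs⟩ := exists_prime_orderOf_dvd_card' p hd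
    by_contra hpn
    have hs' : orderOf (s : G) = p := by simpa using hs
    have hle : ∀ t ∈ Subgroup.zpowers (s : G), ∀ y ∈ B, t * y ∈ B := by
      intro t ht
      rw [← hmemS]
      exact (Subgroup.zpowers_le.2 s.2) ht
    let _ : MulAction (Subgroup.zpowers (s : G)) B :=
      { smul := fun t y => ⟨t * y, hle t t.2 y y.2⟩
        one_smul := fun y => Subtype.ext (one_mul _)
        mul_smul := fun t u y => Subtype.ext (mul_assoc _ _ _) }
    have hpg : IsPGroup p (Subgroup.zpowers (s : G)) :=
      IsPGroup.of_card (n := 1) (by simpa using hs')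
    obtain ⟨y, hy⟩ := hpg.nonempty_fixed_point_of_prime_not_dvd_card B (by
      rw [Nat.card_coe_set_eq, hcB]; exact hpn)
    have h1 : (s : G) * y = y := congrArg Subtype.val (hy ⟨s, Subgroup.mem_zpowers _⟩)
    have h2 : (s : G) = 1 := by simpa using h1
    rw [h2, orderOf_one] at hs'
    exact hp.one_lt.ne hs'
  · intro a ha g
    have hco : (classSize a).Coprime (classSize b) := by rw [ha, hb]; exact hmn
    set C : Set G := {y | ∃ w : G, y = w * (a * b) * w⁻¹} with hC
    have hcC : C.ncard ≤ n := by
      rw [hC, ncard_class]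
      rcases hN (a * b) with h | h | h <;> omega
    have key : ∀ k : G, (fun y => (k * a * k⁻¹) * y) '' B = C := by
      intro k
      apply Set.eq_of_subset_of_ncard_le
      · rintro _ ⟨_, ⟨l, rfl⟩, rfl⟩
        exact prod_class hco k l
      · rw [Set.ncard_image_of_injective _ (mul_right_injective _), hcB]
        exact hcC
      · exact C.toFinite
    rw [hmemS]
    intro y hy
    have h1 : (g * a * g⁻¹) * y ∈ C := by rw [← key g]; exact ⟨y, hy, rfl⟩
    rw [← key 1] at h1
    obtain ⟨z, hz, e⟩ := h1
    have : a⁻¹ * (g * a * g⁻¹) * y = z := by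
      rw [mul_assoc, ← e]; group
    rwa [this]

theorem relIndex_dvd_of_normal (A S : Subgroup G) [S.Normal] : A.relIndex S ∣ A.index := by
  obtain ⟨t, ht⟩ := Subgroup.relIndex_dvd_index_of_normal S A
  have e1 : A.relIndex S * S.index = (A ⊓ S).index := by
    rw [← Subgroup.relIndex_mul_index (inf_le_right : A ⊓ S ≤ S), Subgroup.inf_relIndex_right]
  have e2 : S.relIndex A * A.index = (A ⊓ S).index := by
    rw [← Subgroup.relIndex_mul_index (inf_le_left : A ⊓ S ≤ A), Subgroup.inf_relIndex_left]
  have h0 : 0 < S.relIndex A := Nat.pos_of_ne_zero Subgroup.index_ne_zero_of_finite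
  refine ⟨t, Nat.eq_of_mul_eq_mul_left h0 ?_⟩
  rw [e2, ← e1, ht]
  ring

theorem quot_center_nil {q : ℕ} [Fact q.Prime] (h : IsPGroup q (G ⧸ Subgroup.center G)) :
    Group.IsSolvable G := by
  have h1 : Group.IsNilpotent (G ⧸ Subgroup.center G) := h.isNilpotent
  have h2 : Group.IsNilpotent G := Group.of_quotient_center_nilpotent h1
  infer_instance

theorem main_lt (m n : ℕ) (hlt : m < n) (hm : 1 < m) (hmn : m.Coprime n)
    (hN : ∀ x : G, classSize x = 1 ∨ classSize x = m ∨ classSize x = n)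
    (ha : ∃ a : G, classSize a = m) (hb : ∃ b : G, classSize b = n) : Group.IsSolvable G := by
  obtain ⟨S, hSn, hSp, hS⟩ := exists_S m n hlt hm hmn hN hb
  -- `S` centralizes elements of class size `m`
  have hcent : ∀ a : G, classSize a = m → S ≤ Subgroup.centralizer {a} := by
    intro a ha
    rw [← Subgroup.relIndex_eq_one]
    by_contra hne
    obtain ⟨p, hp, hpd⟩ := Nat.exists_prime_and_dvd hne
    have h1 : p ∣ n := hSp p hp (hpd.trans (Subgroup.relIndex_dvd_card _ _))
    have h2 : (Subgroup.centralizer {a}).relIndex S ∣ (Subgroup.centralizer {a}).index :=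
      relIndex_dvd_of_normal _ _
    have h3 : p ∣ m := by rw [← ha]; exact hpd.trans h2
    exact Nat.not_coprime_of_dvd_of_dvd hp.one_lt h3 h1 hmn
  set M : Set G := {x | classSize x = 1 ∨ classSize x = m} with hM
  have hMn : ∀ x, x ∉ M → classSize x = n := by
    intro x hx
    rcases hN x with h | h | h
    · exact absurd (Or.inl h) hx
    · exact absurd (Or.inr h) hx
    · exact h
  set K : Subgroup G := Subgroup.closure M with hK
  have hMK : ∀ x ∈ M, x ∈ K := fun x hx => Subgroup.subset_closure hx
  have hKn : K.Normal := by
    refine ⟨fun x hx g => ?_⟩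
    have hle : K ≤ K.comap (MulAut.conj g).toMonoidHom := by
      rw [hK, Subgroup.closure_le]
      intro y hy
      have : g * y * g⁻¹ ∈ M := by
        rw [hM, Set.mem_setOf_eq, classSize_conj]; exact hy
      simpa using hMK _ this
    simpa using hle hx
  have hKS : K ≤ Subgroup.centralizer (S : Set G) := by
    rw [hK, Subgroup.closure_le]
    rintro y (hy | hy)
    · exact Subgroup.center_le_centralizer _ (classSize_eq_one.1 hy)
    · refine Subgroup.mem_centralizer_iff.2 fun s hs => ?_
      exact mem_cent.1 (hcent y hy hs)
  have hKc : K ≤ (Subgroup.center (G ⧸ S)).comap (QuotientGroup.mk' S) := by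
    rw [hK, Subgroup.closure_le]
    intro y hy
    refine Subgroup.mem_center_iff.2 fun c => ?_
    obtain ⟨g, rfl⟩ := QuotientGroup.mk_surjective c
    change ((g * y : G) : G ⧸ S) = ((y * g : G) : G ⧸ S)
    rcases hy with hy | hy
    · rw [Subgroup.mem_center_iff.1 (classSize_eq_one.1 hy) g]
    · rw [eq_comm, QuotientGroup.eq]
      have := hSn.conj_mem _ (hS y hy g) g⁻¹
      have e : g⁻¹ * (y⁻¹ * (g * y * g⁻¹)) * g⁻¹⁻¹ = (y * g)⁻¹ * (g * y) := by group
      rwa [e] at this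
  have hKsol : Group.IsSolvable K := by
    have h1 : Group.IsSolvable (S.subgroupOf K) := by
      apply Group.isSolvable_of_comm
      rintro ⟨⟨u, hu⟩, hus⟩ ⟨⟨v, hv⟩, hvs⟩
      apply Subtype.ext
      apply Subtype.ext
      exact (Subgroup.mem_centralizer_iff.1 (hKS hv) u (Subgroup.mem_subgroupOf.1 hus))
    have h2 : Group.IsSolvable (K ⧸ S.subgroupOf K) := by
      apply Group.isSolvable_of_comm
      intro c d
      obtain ⟨u, rfl⟩ := QuotientGroup.mk_surjective c
      obtain ⟨v, rfl⟩ := QuotientGroup.mk_surjective d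
      rw [← QuotientGroup.mk_mul, ← QuotientGroup.mk_mul, QuotientGroup.eq,
        Subgroup.mem_subgroupOf]
      have h3 := Subgroup.mem_center_iff.1 (hKc v.2) ((u : G) : G ⧸ S)
      have h4 : (((u : G) * v : G) : G ⧸ S) = (((v : G) * u : G) : G ⧸ S) := h3
      rw [QuotientGroup.eq] at h4
      exact h4
    exact Group.isSolvable_of_ker_le_range (S.subgroupOf K).subtype
      (QuotientGroup.mk' (S.subgroupOf K)) (by simp)
  suffices hq : Group.IsSolvable (G ⧸ K) by
    exact Group.isSolvable_of_ker_le_range K.subtype (QuotientGroup.mk' K) (by simp)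
  -- lemma A
  have lemA : ∀ (q : ℕ), q.Prime → ∀ x : G, x ∉ K → (∃ k, orderOf x = q ^ k) →
      ∀ r : ℕ, r.Prime → r ≠ q → ∀ y : G, (∃ k, orderOf y = r ^ k) → Commute x y →
      Subgroup.centralizer {x} ≤ Subgroup.centralizer {y} := by
    rintro q hq x hx ⟨k, hk⟩ r hr hrq y ⟨l, hl⟩ hc
    have hco : (orderOf x).Coprime (orderOf y) := by
      rw [hk, hl]
      exact Nat.Coprime.pow _ _ ((Nat.coprime_primes hq hr).2 (Ne.symm hrq))
    obtain ⟨h1, h2⟩ := cent_mul_le hc hco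
    have h3 : x * y ∉ M := by
      intro h
      exact hx (Subgroup.zpowers_le.2 (hMK _ h) (mem_zpowers_mul hc hco))
    have h4 : Subgroup.centralizer {x * y} = Subgroup.centralizer {x} := by
      have e1 : (Subgroup.centralizer {x * y}).index = n := hMn _ h3
      have e2 : (Subgroup.centralizer {x}).index = n := hMn _ (fun h => hx (hMK _ h))
      refine le_antisymm h1 ?_
      rw [← Subgroup.relIndex_eq_one]
      have e3 := Subgroup.relIndex_mul_index h1
      rw [e1, e2] at e3
      exact Nat.eq_of_mul_eq_mul_right (by omega : 0 < n) (by rw [e3, one_mul])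
    rw [← h4]; exact h2
  have lemA' : ∀ (q : ℕ), q.Prime → ∀ x : G, x ∉ K → (∃ k, orderOf x = q ^ k) →
      Group.IsSolvable (Subgroup.centralizer {x}) := by
    intro q hq x hx hk
    have : Fact q.Prime := ⟨hq⟩
    refine quot_center_nil (q := q) (quot_pgroup _ _ ?_)
    rintro r hr hrq ⟨y, hy⟩ ⟨l, hl⟩
    have h := lemA q hq x hx hk r hr hrq y ⟨l, by simpa using hl⟩ (mem_cent.1 hy).symm
    rw [Subgroup.mem_center_iff]
    rintro ⟨z, hz⟩
    exact Subtype.ext (mem_cent.1 (h hz))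
  -- a primary element of class size `m`
  obtain ⟨p, hp, a, ha, hap⟩ : ∃ p : ℕ, p.Prime ∧ ∃ a : G, classSize a = m ∧
      ∃ k, orderOf a = p ^ k := by
    obtain ⟨a, ha⟩ := ha
    have h1 : ¬ Subgroup.zpowers a ≤ Subgroup.center G := by
      rw [Subgroup.zpowers_le, ← classSize_eq_one]; omega
    obtain ⟨p, hp, x, hx, hxc, hk⟩ := exists_primary_sub h1
    refine ⟨p, hp, x, ?_, hk⟩
    have h2 : classSize x ∣ m := by
      rw [← ha]; exact Subgroup.index_dvd_of_le (cent_le_of_mem hx)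
    rw [← classSize_eq_one] at hxc
    rcases hN x with h | h | h
    · exact absurd h hxc
    · exact h
    · rw [h] at h2
      exact absurd (Nat.le_of_dvd (by omega) h2) (by omega)
  have hpm : ¬ p ∣ m := by
    intro hpm
    obtain ⟨g, hg⟩ : ∃ g : G, a⁻¹ * (g * a * g⁻¹) ≠ 1 := by
      by_contra! hcon
      have : a ∈ Subgroup.center G := by
        rw [Subgroup.mem_center_iff]
        intro g
        have h := hcon g
        rw [inv_mul_eq_one] at h
        exact (mul_inv_eq_iff_eq_mul.1 h.symm)
      rw [← classSize_eq_one] at this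
      omega
    have hs := hS a ha g
    have hc : Commute (a⁻¹ * (g * a * g⁻¹)) a := mem_cent.1 (hcent a ha hs)
    obtain ⟨k, hk⟩ := hap
    have h1 : (a⁻¹ * (g * a * g⁻¹)) ^ p ^ k = 1 := by
      have hc2 : Commute (a⁻¹) (g * a * g⁻¹) := by
        have := hc.symm.inv_left.mul_right (Commute.refl a).inv_left
        have h3 := (Commute.refl a).inv_left.mul_right hc.symm.inv_left
        simpa [mul_assoc] using h3
      have e1 : (g * a * g⁻¹) ^ p ^ k = 1 := by
        rw [← hk, ← orderOf_conj a g, pow_orderOf_eq_one]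
      rw [hc2.mul_pow, e1, inv_pow, ← hk, pow_orderOf_eq_one]; simp
    have h2 : p ∣ orderOf (a⁻¹ * (g * a * g⁻¹)) := by
      obtain ⟨j, hj, e⟩ := (Nat.dvd_prime_pow hp).1 (orderOf_dvd_of_pow_eq_one h1)
      rw [e]
      apply dvd_pow_self
      rintro rfl
      rw [pow_zero, orderOf_eq_one_iff] at e
      exact hg e
    have h3 : p ∣ n := hSp p hp (h2.trans (Subgroup.orderOf_dvd_natCard S hs))
    exact Nat.not_coprime_of_dvd_of_dvd hp.one_lt hpm h3 hmn
  -- primary elements of order prime to `p` commuting with `a` lie in `K`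
  have lemB : ∀ q : ℕ, q.Prime → q ≠ p → ∀ z : G, (∃ k, orderOf z = q ^ k) → Commute a z →
      z ∈ K := by
    rintro q hq hqp z ⟨l, hl⟩ hc
    obtain ⟨k, hk⟩ := hap
    have hco : (orderOf a).Coprime (orderOf z) := by
      rw [hk, hl]
      exact Nat.Coprime.pow _ _ ((Nat.coprime_primes hp hq).2 (Ne.symm hqp))
    obtain ⟨h1, h2⟩ := cent_mul_le hc hco
    apply hMK
    by_contra hz
    have d1 : m ∣ classSize (a * z) := by rw [← ha]; exact Subgroup.index_dvd_of_le h1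
    have d2 : n ∣ classSize (a * z) := by rw [← hMn z hz]; exact Subgroup.index_dvd_of_le h2
    have d3 : m * n ∣ classSize (a * z) := hmn.mul_dvd_of_dvd_of_dvd d1 d2
    have h5 : n < m * n := by nlinarith
    rcases hN (a * z) with h | h | h <;> rw [h] at d3 <;>
      have := Nat.le_of_dvd (by omega) d3 <;> omega
  by_cases hcase : ∀ x : G, (∃ k, orderOf x = p ^ k) → x ∈ K
  · have hCK : Subgroup.centralizer {a} ≤ K := by
      by_contra hno
      obtain ⟨q, hq, x, hx, hxK, hk⟩ := exists_primary_sub hno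
      by_cases hqp : q = p
      · subst hqp; exact hxK (hcase x hk)
      · exact hxK (lemB q hq hqp x hk (mem_cent.1 hx).symm)
    by_cases htop : (⊤ : Subgroup G) ≤ K
    · have : Subsingleton (G ⧸ K) := by
        rw [top_le_iff.1 htop]; exact QuotientGroup.subsingleton_quotient_top
      infer_instance
    obtain ⟨q, hq, x, -, hxK, hk⟩ := exists_primary_sub htop
    have := lemA' q hq x hxK hk
    have hco : (Subgroup.centralizer {a}).index.Coprime (Subgroup.centralizer {x}).index := by
      have e1 : (Subgroup.centralizer {a}).index = m := ha
      have e2 : (Subgroup.centralizer {x}).index = n := hMn _ (fun h => hxK (hMK _ h))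
      rw [e1, e2]; exact hmn
    refine Group.isSolvable_of_surjective
      (f := (QuotientGroup.mk' K).comp (Subgroup.centralizer {x}).subtype) ?_
    intro c
    obtain ⟨g, rfl⟩ := QuotientGroup.mk_surjective c
    obtain ⟨u, hu, v, hv, rfl⟩ := factor hco g
    refine ⟨⟨u, hu⟩, ?_⟩
    change ((u : G) : G ⧸ K) = ((u * v : G) : G ⧸ K)
    rw [QuotientGroup.eq]
    simpa using hCK hv
  · push Not at hcase
    obtain ⟨x0, hx0, hx0K⟩ := hcase
    obtain ⟨g, hg⟩ := exists_conj_mem (D := Subgroup.centralizer {a}) hp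
      (by have e1 : (Subgroup.centralizer {a}).index = m := ha
          rwa [e1]) hx0
    obtain ⟨x, hx⟩ : ∃ x, x = g * x0 * g⁻¹ := ⟨_, rfl⟩
    have hback : ∀ g z : G, g * z * g⁻¹ ∈ K → z ∈ K := by
      intro g z h
      have := hKn.conj_mem _ h g⁻¹
      have e : g⁻¹ * (g * z * g⁻¹) * g⁻¹⁻¹ = z := by group
      rwa [e] at this
    have hxK : x ∉ K := fun h => hx0K (hback g x0 (hx ▸ h))
    have hxo : ∃ k, orderOf x = p ^ k := by rw [hx, orderOf_conj]; exact hx0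
    have hxa : Commute x a := by rw [hx]; exact mem_cent.1 hg
    have : Fact p.Prime := ⟨hp⟩
    have hpg : IsPGroup p (G ⧸ K) := by
      apply quot_pgroup
      intro q hq hqp z hz
      by_cases hqm : q ∣ m
      · have hqn : ¬ q ∣ n := fun h => Nat.not_coprime_of_dvd_of_dvd hq.one_lt hqm h hmn
        obtain ⟨t, ht⟩ := exists_conj_mem (D := Subgroup.centralizer {x}) hq
          (by have e2 : (Subgroup.centralizer {x}).index = n := hMn _ (fun h => hxK (hMK _ h))
              rwa [e2]) hz
        rw [← orderOf_conj z t] at hz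
        have h := lemA p hp x hxK hxo q hq hqp _ hz (mem_cent.1 ht).symm
        exact hback t z (lemB q hq hqp _ hz (mem_cent.1 (h (mem_cent.2 hxa.symm))))
      · obtain ⟨t, ht⟩ := exists_conj_mem (D := Subgroup.centralizer {a}) hq
          (by have e2 : (Subgroup.centralizer {a}).index = m := ha
              rwa [e2]) hz
        rw [← orderOf_conj z t] at hz
        exact hback t z (lemB q hq hqp _ hz (mem_cent.1 ht).symm)
    have h1 : Group.IsNilpotent (G ⧸ K) := hpg.isNilpotent
    infer_instance

end ItoAux

/-- Ito (1970): if `N(G) = {1, m, n}` with `m, n` coprime and greater than `1`, then `G`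
is solvable. -/
theorem ito_three_class_sizes_solvable {G : Type*} [Group G] [Finite G] (m n : ℕ)
    (hm : 1 < m) (hn : 1 < n) (hmn : Nat.Coprime m n)
    (hN : {k : ℕ | ∃ x : G, classSize x = k} = {1, m, n}) :
    IsSolvable G := by
  have h : ∀ k : ℕ, (∃ x : G, classSize x = k) ↔ k = 1 ∨ k = m ∨ k = n := by
    intro k
    have := Set.ext_iff.1 hN k
    simpa using this
  have hN' : ∀ x : G, classSize x = 1 ∨ classSize x = m ∨ classSize x = n :=
    fun x => (h _).1 ⟨x, rfl⟩
  have ha : ∃ a : G, classSize a = m := (h m).2 (by simp)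
  have hb : ∃ a : G, classSize a = n := (h n).2 (by simp)
  rcases lt_trichotomy m n with hlt | heq | hlt
  · exact ItoAux.main_lt m n hlt hm hmn hN' ha hb
  · subst heq
    rw [Nat.coprime_self] at hmn
    omega
  · exact ItoAux.main_lt n m hlt hn hmn.symm (fun x => by have := hN' x; tauto) hb ha
end
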